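/- arXiv:cs/0602075 — 5 statements merged into one kernel-verified Lean document; each statement's English description precedes it below -/
import Mathlib

section
/- Let n ≥ 2 and let M be a nonzero n×n matrix with entries in {0,1} (indexed by {0,…,n−1}) having no all-ones row and no all-ones column. Then M is an a-Monge matrix if and only if one of the following holds: (i) M = L_n^{pq} for some 0 ≤ p,q ≤ n−2; or (ii) M = R_n^{st} for some 1 ≤ s,t ≤ n−1; or (iii) M = L_n^{pq} + R_n^{st} for some 0 ≤ p,q ≤ n−2 and 1 ≤ s,t ≤ n−1 with p < s, or q < t, or both. -/
/-- An `n × n` matrix (indexed by `Fin n`) is a-Monge if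
`M i k + M j l ≥ M i l + M j k` whenever `i < j` and `k < l`. -/
def AMonge {n : ℕ} (M : Fin n → Fin n → ℤ) : Prop :=
  ∀ i j k l : Fin n, i < j → k < l → M i l + M j k ≤ M i k + M j l

/-- The 0-1 matrix `L_n^{pq}`: entry `(i,j)` is `1` iff `i ≤ p` and `j ≤ q`. -/
def Lmat {n : ℕ} (p q : Fin n) : Fin n → Fin n → ℤ :=
  fun i j => if i ≤ p ∧ j ≤ q then 1 else 0

/-- The 0-1 matrix `R_n^{st}`: entry `(i,j)` is `1` iff `i ≥ s` and `j ≥ t`. -/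
def Rmat {n : ℕ} (s t : Fin n) : Fin n → Fin n → ℤ :=
  fun i j => if s ≤ i ∧ t ≤ j then 1 else 0

/-- The transpose of an a-Monge matrix is a-Monge. -/
theorem AMonge.transpose {n : ℕ} {M : Fin n → Fin n → ℤ} (hM : AMonge M) :
    AMonge fun i j => M j i := by
  intro i j k l hij hkl
  have := hM k l i j hkl hij
  dsimp only
  linarith

/-- Reversing the order of both rows and columns preserves the a-Monge property. -/
theorem AMonge.rev {n : ℕ} {M : Fin n → Fin n → ℤ} (hM : AMonge M) :
    AMonge fun i j => M i.rev j.rev := by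
  intro i j k l hij hkl
  have := hM j.rev i.rev l.rev k.rev (Fin.rev_lt_rev.2 hij) (Fin.rev_lt_rev.2 hkl)
  dsimp only
  linarith

theorem AMonge.add {n : ℕ} {M N : Fin n → Fin n → ℤ} (hM : AMonge M) (hN : AMonge N) :
    AMonge fun i j => M i j + N i j := by
  intro i j k l hij hkl
  have h₁ := hM i j k l hij hkl
  have h₂ := hN i j k l hij hkl
  dsimp only
  linarith

theorem aMonge_Lmat {n : ℕ} (p q : Fin n) : AMonge (Lmat p q) := by
  intro i j k l hij hkl
  simp only [Lmat]
  grind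

theorem aMonge_Rmat {n : ℕ} (s t : Fin n) : AMonge (Rmat s t) := by
  intro i j k l hij hkl
  simp only [Rmat]
  grind

/-- The first row of a 0-1 a-Monge matrix without all-ones columns is non-increasing. -/
theorem AMonge.first_row_antitone {m : ℕ} {M : Fin (m + 2) → Fin (m + 2) → ℤ} (hM : AMonge M)
    (h01 : ∀ i j, M i j = 0 ∨ M i j = 1) (hcol : ∀ j, ∃ i, M i j ≠ 1)
    {k l : Fin (m + 2)} (hkl : k ≤ l) (hl : M 0 l = 1) : M 0 k = 1 := by
  rcases hkl.eq_or_lt with rfl | hlt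
  · exact hl
  obtain ⟨r, hr⟩ := hcol l
  have hr0 : 0 < r := Fin.pos_iff_ne_zero.2 fun h => hr (h ▸ hl)
  have := hM 0 r k l hr0 hlt
  have := h01 0 k
  have := h01 r k
  have := h01 r l
  omega

/-- The upper right corner of a 0-1 a-Monge matrix without all-ones rows or columns is zero. -/
theorem AMonge.upper_right_eq_zero {m : ℕ} {M : Fin (m + 2) → Fin (m + 2) → ℤ} (hM : AMonge M)
    (h01 : ∀ i j, M i j = 0 ∨ M i j = 1) (hrow : ∀ i, ∃ j, M i j ≠ 1)
    (hcol : ∀ j, ∃ i, M i j ≠ 1) : M 0 (Fin.last (m + 1)) = 0 := by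
  refine (h01 _ _).resolve_right fun h => ?_
  obtain ⟨j, hj⟩ := hrow 0
  exact hj (hM.first_row_antitone h01 hcol (Fin.le_last j) h)

/-- A proper nonempty initial segment of `Fin (m + 2)` is cut out by a threshold. -/
theorem exists_threshold_of_antitone {m : ℕ} (P : Fin (m + 2) → Prop)
    (hP : ∀ ⦃k l⦄, k ≤ l → P l → P k) (h0 : P 0) (hlast : ¬ P (Fin.last (m + 1))) :
    ∃ q : Fin (m + 2), (q : ℕ) ≤ m ∧ ∀ j, P j ↔ j ≤ q := by
  obtain ⟨q, hq⟩ := (Set.toFinite {j | P j}).exists_maximal ⟨0, h0⟩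
  refine ⟨q, ?_, fun j => ⟨fun hj => ?_, fun hj => hP hj hq.prop⟩⟩
  · have : q ≠ Fin.last (m + 1) := fun h => hlast (h ▸ hq.prop)
    have := Fin.val_lt_last this
    omega
  · exact (le_total j q).elim id fun h => hq.le_of_ge hj h

/-- A proper nonempty final segment of `Fin (m + 2)` is cut out by a threshold. -/
theorem exists_threshold_of_monotone {m : ℕ} (P : Fin (m + 2) → Prop)
    (hP : ∀ ⦃k l⦄, k ≤ l → P k → P l) (h0 : ¬ P 0) (hlast : P (Fin.last (m + 1))) :
    ∃ t : Fin (m + 2), 1 ≤ (t : ℕ) ∧ ∀ j, P j ↔ t ≤ j := by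
  obtain ⟨q, hq, h⟩ := exists_threshold_of_antitone (fun j => P j.rev)
    (fun k l hkl => hP (Fin.rev_le_rev.2 hkl)) (by simpa using hlast) (by simpa using h0)
  refine ⟨q.rev, by rw [Fin.val_rev]; omega, fun j => ?_⟩
  have := h j.rev
  rwa [Fin.rev_rev, ← Fin.rev_le_rev, Fin.rev_rev] at this

/-- If row `i` of a 0-1 a-Monge matrix vanishes at both ends, then a one in row `i` forces an
all-ones column. -/
theorem AMonge.eq_one_of_row_ends_eq_zero {m : ℕ} {M : Fin (m + 2) → Fin (m + 2) → ℤ}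
    (hM : AMonge M) (h01 : ∀ i j, M i j = 0 ∨ M i j = 1) {i j : Fin (m + 2)}
    (hij : M i j = 1) (hi0 : M i 0 = 0) (hil : M i (Fin.last (m + 1)) = 0) (r : Fin (m + 2)) :
    M r j = 1 := by
  have hj0 : 0 < j := Fin.pos_iff_ne_zero.2 fun h => by subst h; omega
  have hjl : j < Fin.last (m + 1) := Fin.lt_last_iff_ne_last.2 fun h => by subst h; omega
  rcases lt_trichotomy r i with h | rfl | h
  · have := hM r i j _ h hjl
    have := h01 r j
    have := h01 r (Fin.last (m + 1))
    omega
  · exact hij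
  · have := hM i r 0 j h hj0
    have := h01 r j
    have := h01 r 0
    omega

/-- If `M 0 j = M i 0 = 1` in a 0-1 a-Monge matrix, then `M i j = 1`. -/
theorem AMonge.eq_one_of_first {m : ℕ} {M : Fin (m + 2) → Fin (m + 2) → ℤ}
    (hM : AMonge M) (h01 : ∀ i j, M i j = 0 ∨ M i j = 1) {i j : Fin (m + 2)}
    (h0j : M 0 j = 1) (hi0 : M i 0 = 1) : M i j = 1 := by
  rcases (Fin.zero_le i).eq_or_lt with rfl | hi
  · exact h0j
  rcases (Fin.zero_le j).eq_or_lt with rfl | hj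
  · exact hi0
  have := hM 0 i 0 j hi hj
  have := h01 0 0
  have := h01 i j
  omega

/-- Every entry of a 0-1 a-Monge matrix without all-ones rows or columns is determined by the
boundary rows and columns. -/
theorem AMonge.eq_one_iff_boundary {m : ℕ} {M : Fin (m + 2) → Fin (m + 2) → ℤ} (hM : AMonge M)
    (h01 : ∀ i j, M i j = 0 ∨ M i j = 1) (hrow : ∀ i, ∃ j, M i j ≠ 1)
    (hcol : ∀ j, ∃ i, M i j ≠ 1) (i j : Fin (m + 2)) :
    M i j = 1 ↔ (M 0 j = 1 ∧ M i 0 = 1) ∨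
      (M (Fin.last (m + 1)) j = 1 ∧ M i (Fin.last (m + 1)) = 1) := by
  constructor
  · intro hij
    have hrow_end : M i 0 = 1 ∨ M i (Fin.last (m + 1)) = 1 := by
      by_contra! h
      obtain ⟨r, hr⟩ := hcol j
      exact hr (hM.eq_one_of_row_ends_eq_zero h01 hij ((h01 _ _).resolve_right h.1)
        ((h01 _ _).resolve_right h.2) r)
    have hcol_end : M 0 j = 1 ∨ M (Fin.last (m + 1)) j = 1 := by
      by_contra! h
      obtain ⟨r, hr⟩ := hrow i
      exact hr (hM.transpose.eq_one_of_row_ends_eq_zero (fun a b => h01 b a) hij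
        ((h01 _ _).resolve_right h.1) ((h01 _ _).resolve_right h.2) r)
    have hupper : M 0 j = 1 ∨ M i (Fin.last (m + 1)) = 1 := by
      rcases (Fin.zero_le i).eq_or_lt with rfl | hi
      · exact Or.inl hij
      rcases (Fin.le_last j).eq_or_lt with rfl | hj
      · exact Or.inr hij
      have := hM 0 i j _ hi hj
      have := hM.upper_right_eq_zero h01 hrow hcol
      have := h01 0 j
      have := h01 i (Fin.last (m + 1))
      omega
    have hlower : M i 0 = 1 ∨ M (Fin.last (m + 1)) j = 1 := by
      rcases (Fin.zero_le j).eq_or_lt with rfl | hj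
      · exact Or.inl hij
      rcases (Fin.le_last i).eq_or_lt with rfl | hi
      · exact Or.inr hij
      have := hM i _ 0 j hi hj
      have := hM.transpose.upper_right_eq_zero (fun a b => h01 b a) hcol hrow
      have := h01 i 0
      have := h01 (Fin.last (m + 1)) j
      omega
    tauto
  · rintro (⟨h₁, h₂⟩ | ⟨h₁, h₂⟩)
    · exact hM.eq_one_of_first h01 h₁ h₂
    · simpa using hM.rev.eq_one_of_first (fun a b => h01 _ _) (i := i.rev) (j := j.rev)
        (by simpa using h₁) (by simpa using h₂)

/-- A nonzero 0-1 square matrix without all-ones rows or columns is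
a-Monge iff it is `L_n^{pq}`, or `R_n^{st}`, or `L_n^{pq} + R_n^{st}` with `p < s` or
`q < t` (or both), for parameters in the stated ranges. -/
theorem zero_one_aMonge_structure
    {n : ℕ} (hn : 2 ≤ n) (M : Fin n → Fin n → ℤ)
    (h01 : ∀ i j, M i j = 0 ∨ M i j = 1)
    (hnz : ∃ i j, M i j ≠ 0)
    (hrow : ∀ i, ∃ j, M i j ≠ 1)
    (hcol : ∀ j, ∃ i, M i j ≠ 1) :
    AMonge M ↔
      ((∃ p q : Fin n, (p : ℕ) ≤ n - 2 ∧ (q : ℕ) ≤ n - 2 ∧ M = Lmat p q) ∨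
       (∃ s t : Fin n, 1 ≤ (s : ℕ) ∧ 1 ≤ (t : ℕ) ∧ M = Rmat s t) ∨
       (∃ p q s t : Fin n, (p : ℕ) ≤ n - 2 ∧ (q : ℕ) ≤ n - 2 ∧
          1 ≤ (s : ℕ) ∧ 1 ≤ (t : ℕ) ∧ (p < s ∨ q < t) ∧
          M = fun i j => Lmat p q i j + Rmat s t i j)) := by
  constructor
  swap
  · rintro (⟨p, q, -, -, rfl⟩ | ⟨s, t, -, -, rfl⟩ | ⟨p, q, s, t, -, -, -, -, -, rfl⟩)
    · exact aMonge_Lmat p q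
    · exact aMonge_Rmat s t
    · exact (aMonge_Lmat p q).add (aMonge_Rmat s t)
  intro hM
  obtain ⟨m, rfl⟩ := Nat.exists_eq_add_of_le' hn
  rw [Nat.add_sub_cancel]
  have h01T : ∀ i j, M j i = 0 ∨ M j i = 1 := fun i j => h01 j i
  have hUR := hM.upper_right_eq_zero h01 hrow hcol
  have hLL := hM.transpose.upper_right_eq_zero h01T hcol hrow
  have hrevrow : ∀ i : Fin (m + 2), ∃ j : Fin (m + 2), M i.rev j.rev ≠ 1 := fun i =>
    (hrow i.rev).imp' Fin.rev fun j hj => by rwa [Fin.rev_rev]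
  have hrevcol : ∀ j : Fin (m + 2), ∃ i : Fin (m + 2), M i.rev j.rev ≠ 1 := fun j =>
    (hcol j.rev).imp' Fin.rev fun i hi => by rwa [Fin.rev_rev]
  have hfirst_row : ∀ ⦃k l⦄, k ≤ l → M 0 l = 1 → M 0 k = 1 := fun k l hkl =>
    hM.first_row_antitone h01 hcol hkl
  have hfirst_col : ∀ ⦃k l⦄, k ≤ l → M l 0 = 1 → M k 0 = 1 := fun k l hkl =>
    hM.transpose.first_row_antitone h01T hrow hkl
  have hlast_row : ∀ ⦃k l⦄, k ≤ l → M (Fin.last (m + 1)) k = 1 → M (Fin.last (m + 1)) l = 1 :=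
    fun k l hkl hk => by
      simpa using hM.rev.first_row_antitone (fun _ _ => h01 _ _) hrevcol
        (Fin.rev_le_rev.2 hkl) (by simpa using hk)
  have hlast_col : ∀ ⦃k l⦄, k ≤ l → M k (Fin.last (m + 1)) = 1 → M l (Fin.last (m + 1)) = 1 :=
    fun k l hkl hk => by
      simpa using hM.rev.transpose.first_row_antitone (fun _ _ => h01 _ _) hrevrow
        (Fin.rev_le_rev.2 hkl) (by simpa using hk)
  have hiff := hM.eq_one_iff_boundary h01 hrow hcol
  have hL : M 0 0 = 1 → ∃ p q : Fin (m + 2), (p : ℕ) ≤ m ∧ (q : ℕ) ≤ m ∧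
      ∀ i j, (M 0 j = 1 ∧ M i 0 = 1) ↔ (i ≤ p ∧ j ≤ q) := by
    intro h
    obtain ⟨q, hq, hq'⟩ := exists_threshold_of_antitone (fun j => M 0 j = 1) hfirst_row h
      (by omega)
    obtain ⟨p, hp, hp'⟩ := exists_threshold_of_antitone (fun i => M i 0 = 1) hfirst_col h
      (by omega)
    exact ⟨p, q, hp, hq, fun i j => by rw [hq' j, hp' i, and_comm]⟩
  have hR : M (Fin.last (m + 1)) (Fin.last (m + 1)) = 1 →
      ∃ s t : Fin (m + 2), 1 ≤ (s : ℕ) ∧ 1 ≤ (t : ℕ) ∧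
      ∀ i j, (M (Fin.last (m + 1)) j = 1 ∧ M i (Fin.last (m + 1)) = 1) ↔ (s ≤ i ∧ t ≤ j) := by
    intro h
    obtain ⟨t, ht, ht'⟩ := exists_threshold_of_monotone (fun j => M (Fin.last (m + 1)) j = 1)
      hlast_row (by omega) h
    obtain ⟨s, hs, hs'⟩ := exists_threshold_of_monotone (fun i => M i (Fin.last (m + 1)) = 1)
      hlast_col (by omega) h
    exact ⟨s, t, hs, ht, fun i j => by rw [ht' j, hs' i, and_comm]⟩
  have hnoL : M 0 0 ≠ 1 → ∀ i j, ¬ (M 0 j = 1 ∧ M i 0 = 1) := fun h i j hij =>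
    h (hfirst_row (Fin.zero_le j) hij.1)
  have hnoR : M (Fin.last (m + 1)) (Fin.last (m + 1)) ≠ 1 →
      ∀ i j, ¬ (M (Fin.last (m + 1)) j = 1 ∧ M i (Fin.last (m + 1)) = 1) := fun h i j hij =>
    h (hlast_row (Fin.le_last j) hij.1)
  by_cases h00 : M 0 0 = 1 <;> by_cases hll : M (Fin.last (m + 1)) (Fin.last (m + 1)) = 1
  · obtain ⟨p, q, hp, hq, hpq⟩ := hL h00
    obtain ⟨s, t, hs, ht, hst⟩ := hR hll
    simp only [hpq, hst] at hiff
    have hsep : p < s ∨ q < t := by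
      by_contra! h
      obtain ⟨r, hr⟩ := hcol q
      refine hr ((hiff r q).2 ?_)
      rcases le_total r p with hrp | hrp
      · exact Or.inl ⟨hrp, le_rfl⟩
      · exact Or.inr ⟨h.1.trans hrp, h.2⟩
    refine Or.inr (Or.inr ⟨p, q, s, t, hp, hq, hs, ht, hsep, ?_⟩)
    funext i j
    have := hiff i j
    have := h01 i j
    simp only [Lmat, Rmat]
    grind
  · obtain ⟨p, q, hp, hq, hpq⟩ := hL h00
    refine Or.inl ⟨p, q, hp, hq, ?_⟩
    funext i j
    have := hiff i j
    rw [hpq, or_iff_left (hnoR hll i j)] at this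
    have := h01 i j
    simp only [Lmat]
    grind
  · obtain ⟨s, t, hs, ht, hst⟩ := hR hll
    refine Or.inr (Or.inl ⟨s, t, hs, ht, ?_⟩)
    funext i j
    have := hiff i j
    rw [hst, or_iff_right (hnoL h00 i j)] at this
    have := h01 i j
    simp only [Rmat]
    grind
  · obtain ⟨i, j, hij⟩ := hnz
    exact ((hiff i j).1 ((h01 i j).resolve_left hij)).elim (hnoL h00 i j) (hnoR hll i j) |>.elim
end

section
/- Let D be a finite linearly ordered set, let n ≥ 2, and let f : D^n → ℤ be a function with non-negative values. Then f is supermodular on this chain if and only if every binary function obtained from f by substituting constants from D for any chosen n−2 of its variables is supermodular on this chain. -/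
/-- An `n`-ary function on a chain `D` is supermodular if
`f a + f b ≤ f (a ⊓ b) + f (a ⊔ b)` with componentwise min and max. -/
def Supermod {D : Type*} [LinearOrder D] {n : ℕ} (f : (Fin n → D) → ℤ) : Prop :=
  ∀ a b : Fin n → D,
    f a + f b ≤ f (fun i => min (a i) (b i)) + f (fun i => max (a i) (b i))

/-- A binary function on a chain `D` is supermodular if
`g x₁ y₁ + g x₂ y₂ ≤ g (min x₁ x₂) (min y₁ y₂) + g (max x₁ x₂) (max y₁ y₂)`. -/
def Supermod2 {D : Type*} [LinearOrder D] (g : D → D → ℤ) : Prop :=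
  ∀ x1 y1 x2 y2 : D,
    g x1 y1 + g x2 y2 ≤ g (min x1 x2) (min y1 y2) + g (max x1 x2) (max y1 y2)

/-- If the binary restrictions of `f` are supermodular, then the increments of `f` in one
coordinate are monotone in the remaining coordinates. -/
theorem increment_mono_of_binary_supermod {D : Type*} [LinearOrder D] {n : ℕ}
    {f : (Fin n → D) → ℤ}
    (h : ∀ (i j : Fin n), i ≠ j → ∀ c : Fin n → D,
      Supermod2 (fun x y => f (fun k => if k = i then x else if k = j then y else c k)))
    (i : Fin n) {x y : D} (hxy : x ≤ y) {c d : Fin n → D} (hcd : c ≤ d) :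
    f (Function.update c i y) - f (Function.update c i x) ≤
      f (Function.update d i y) - f (Function.update d i x) := by
  suffices key : ∀ T : Finset (Fin n),
      f (Function.update c i y) - f (Function.update c i x) ≤
        f (Function.update (T.piecewise d c) i y) -
          f (Function.update (T.piecewise d c) i x) by
    simpa using key Finset.univ
  intro T
  induction T using Finset.induction_on with
  | empty => simp
  | insert j T hj ih =>
    refine ih.trans ?_
    rw [Finset.piecewise_insert]
    have hj' : T.piecewise d c j = c j := Finset.piecewise_eq_of_notMem _ _ _ hj
    generalize T.piecewise d c = e at hj' ⊢
    by_cases hij : i = j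
    · subst hij
      simp
    have hsub : ∀ u v : D, (fun k => if k = i then u else if k = j then v else e k) =
        Function.update (Function.update e j v) i u := by
      intro u v
      ext k
      simp [Function.update_apply]
    have hle := h i j hij e y (e j) x (d j)
    have hejd : e j ≤ d j := hj' ▸ hcd j
    simp only [hsub, min_eq_right hxy, max_eq_left hxy, min_eq_left hejd,
      max_eq_right hejd, Function.update_eq_self] at hle
    linarith

/-- If the binary restrictions of `f` are supermodular, then raising a set of coordinates on which
`p` and `p'` agree increases `f` more at the larger of the two points. -/
theorem piecewise_increment_le_of_binary_supermod {D : Type*} [LinearOrder D] {n : ℕ}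
    {f : (Fin n → D) → ℤ}
    (h : ∀ (i j : Fin n), i ≠ j → ∀ c : Fin n → D,
      Supermod2 (fun x y => f (fun k => if k = i then x else if k = j then y else c k)))
    {p p' q : Fin n → D} (hp : p ≤ p') (S : Finset (Fin n))
    (hS : ∀ i ∈ S, p i = p' i ∧ p i ≤ q i) :
    f (S.piecewise q p) - f p ≤ f (S.piecewise q p') - f p' := by
  induction S using Finset.induction_on with
  | empty => simp
  | insert i S hi ih =>
    have hprev := ih fun j hj => hS j (Finset.mem_insert_of_mem hj)
    obtain ⟨heq, hle⟩ := hS i (Finset.mem_insert_self i S)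
    have hmono : S.piecewise q p ≤ S.piecewise q p' :=
      Finset.piecewise_le_piecewise S le_rfl hp
    have hstep := increment_mono_of_binary_supermod h i hle hmono
    have hbase : Function.update (S.piecewise q p) i (p i) = S.piecewise q p := by
      simp [hi]
    have hbase' : Function.update (S.piecewise q p') i (p i) = S.piecewise q p' := by
      simp [hi, heq]
    rw [hbase, hbase'] at hstep
    rw [Finset.piecewise_insert, Finset.piecewise_insert]
    linarith

/-- A non-negative `n`-ary function (`n ≥ 2`) on a finite chain is
supermodular iff every binary function obtained from it by substituting constants
for any chosen `n − 2` of its variables is supermodular on this chain. -/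
theorem supermodular_iff_binary_restrictions
    {D : Type*} [Fintype D] [LinearOrder D] {n : ℕ} (hn : 2 ≤ n)
    (f : (Fin n → D) → ℤ) (hpos : ∀ t, 0 ≤ f t) :
    Supermod f ↔
      ∀ (i j : Fin n), i ≠ j → ∀ c : Fin n → D,
        Supermod2 (fun x y =>
          f (fun k => if k = i then x else if k = j then y else c k)) := by
  constructor
  · intro h i j _ c x1 y1 x2 y2
    convert h (fun k => if k = i then x1 else if k = j then y1 else c k)
      (fun k => if k = i then x2 else if k = j then y2 else c k) using 3 <;>
    · ext k
      split_ifs <;> simp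
  · intro h a b
    have hle := piecewise_increment_le_of_binary_supermod h
      (p := fun i => min (a i) (b i)) (p' := b) (q := a) (fun i => min_le_right _ _)
      (Finset.univ.filter fun i => b i ≤ a i) (by simp +contextual)
    have hinf : (Finset.univ.filter fun i => b i ≤ a i).piecewise a
        (fun i => min (a i) (b i)) = a := by
      ext i
      by_cases hi : b i ≤ a i
      · simp [Finset.piecewise, hi]
      · simp [Finset.piecewise, (not_le.mp hi).le]
    have hsup : (Finset.univ.filter fun i => b i ≤ a i).piecewise a b =
        fun i => max (a i) (b i) := by
      ext i
      by_cases hi : b i ≤ a i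
      · simp [Finset.piecewise, hi]
      · simp [Finset.piecewise, hi, (not_le.mp hi).le]
    rw [hinf, hsup] at hle
    linarith
end

section
/- Let D be a finite set, let h : D² → {0,1} be a binary predicate, and suppose there is a ∈ D with h(x,a) = 1 for all x ∈ D. Define h' : D² → {0,1} by h'(x,y) = 0 if y = a and h'(x,y) = h(x,y) if y ≠ a. Then for every linear order on D, h is supermodular on that chain if and only if h' is supermodular on that chain. -/
/-- A binary function on `D` is supermodular with respect to a given linear order
`r` on `D` if `g x₁ y₁ + g x₂ y₂ ≤ g (min x₁ x₂) (min y₁ y₂) + g (max x₁ x₂) (max y₁ y₂)`,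
where min and max are taken in the order `r`. -/
def SupermodChain2 {D : Type*} (r : LinearOrder D) (g : D → D → ℤ) : Prop :=
  ∀ x1 y1 x2 y2 : D,
    g x1 y1 + g x2 y2 ≤
      g (r.min x1 x2) (r.min y1 y2) + g (r.max x1 x2) (r.max y1 y2)

/-- Supermodularity on a chain is unaffected by subtracting a function of the second
coordinate only. -/
theorem supermodChain2_sub_snd_iff {D : Type*} (r : LinearOrder D) (g : D → D → ℤ) (φ : D → ℤ) :
    SupermodChain2 r (fun x y => g x y - φ y) ↔ SupermodChain2 r g := by
  have hφ (y₁ y₂ : D) : φ (r.min y₁ y₂) + φ (r.max y₁ y₂) = φ y₁ + φ y₂ := by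
    change φ (min y₁ y₂) + φ (max y₁ y₂) = φ y₁ + φ y₂
    rcases le_total y₁ y₂ with hle | hle <;> simp [hle, add_comm]
  refine forall₄_congr fun x₁ y₁ x₂ y₂ => ?_
  have := hφ y₁ y₂
  dsimp only
  constructor <;> intro <;> linarith

/-- Let `h` be a binary predicate on a finite set `D` with an
all-ones column `a` (i.e. `h x a = 1` for all `x`), and let `h'` be obtained from
`h` by zeroing out that column.  Then for every linear order (chain) on `D`, `h` is
supermodular on the chain iff `h'` is. -/
theorem supermodular_zeroed_column
    {D : Type*} [Fintype D] [DecidableEq D]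
    (h : D → D → ℤ) (h01 : ∀ x y, h x y = 0 ∨ h x y = 1)
    (a : D) (hall : ∀ x, h x a = 1) :
    ∀ r : LinearOrder D,
      SupermodChain2 r h ↔
        SupermodChain2 r (fun x y => if y = a then 0 else h x y) := by
  intro r
  have heq : (fun x y => if y = a then 0 else h x y) =
      fun x y => h x y - if y = a then 1 else 0 := by
    funext x y
    split_ifs with hy
    · simp [hy, hall]
    · simp
  rw [heq, supermodChain2_sub_snd_iff r h fun y => if y = a then 1 else 0]
end

section
/- Let D be a finite set and let F be a finite set of binary predicates on D such that F is not supermodular on any chain on D. Then there exist a subset F' ⊆ F with |F'| ≤ 3 and a subset D' ⊆ D with |D'| ≤ 4 such that the set of restrictions {f restricted to D'×D' : f ∈ F'} is not supermodular on any chain on D'. -/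
/-- The mixed second difference of `f` over the row pair `(p, q)` and the column pair `(s, t)`. -/
def crossDiff {D : Type*} (f : D → D → ℤ) (p q s t : D) : ℤ :=
  f p s + f q t - f p t - f q s

/-- `pos` ranks the elements of `X` in such a way that `f` is supermodular on `X`
with respect to that ranking. -/
def SupermodRank {D : Type*} (pos : D → ℤ) (f : D → D → ℤ) (X : Set D) : Prop :=
  ∀ p ∈ X, ∀ q ∈ X, ∀ s ∈ X, ∀ t ∈ X,
    pos p ≤ pos q → pos s ≤ pos t → 0 ≤ crossDiff f p q s t

/-- Every four elements can be ranked so that `f` is supermodular on them. -/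
def LocallySupermod {D : Type*} (f : D → D → ℤ) : Prop :=
  ∀ a b c d : D, ∃ pos : D → ℤ, SupermodRank pos f {a, b, c, d}

section Rank

variable {D : Type*} {f : D → D → ℤ} {pos : D → ℤ} {X : Set D}

theorem SupermodRank.neg (h : SupermodRank pos f X) : SupermodRank (-pos) f X := by
  intro p hp q hq s hs t ht hpq hst
  have := h q hq p hp t ht s hs (by simpa using hpq) (by simpa using hst)
  unfold crossDiff at *
  linarith

theorem SupermodRank.flip (h : SupermodRank pos f X) :
    SupermodRank pos (fun x y => f y x) X := by
  intro p hp q hq s hs t ht hpq hst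
  have := h s hs t ht p hp q hq hst hpq
  unfold crossDiff at *
  linarith

theorem LocallySupermod.flip (h : LocallySupermod f) :
    LocallySupermod (fun x y => f y x) := fun a b c d =>
  (h a b c d).imp fun _ hpos => hpos.flip

/-- A positive second difference forces the two pairs to be ranked in the same direction. -/
theorem SupermodRank.lt_of_lt (h : SupermodRank pos f X) {p q s t : D}
    (hp : p ∈ X) (hq : q ∈ X) (hs : s ∈ X) (ht : t ∈ X)
    (hc : 0 < crossDiff f p q s t) (hpq : pos p < pos q) : pos s < pos t := by
  by_contra hcon
  have := h p hp q hq t ht s hs hpq.le (not_lt.mp hcon)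
  unfold crossDiff at *
  linarith

theorem SupermodRank.lt_of_lt' (h : SupermodRank pos f X) {p q s t : D}
    (hp : p ∈ X) (hq : q ∈ X) (hs : s ∈ X) (ht : t ∈ X)
    (hc : 0 < crossDiff f p q s t) (hst : pos s < pos t) : pos p < pos q := by
  by_contra hcon
  have := h q hq p hp s hs t ht (not_lt.mp hcon) hst.le
  unfold crossDiff at *
  linarith

theorem SupermodRank.ne (h : SupermodRank pos f X) {p q s t : D}
    (hp : p ∈ X) (hq : q ∈ X) (hs : s ∈ X) (ht : t ∈ X)
    (hc : 0 < crossDiff f p q s t) : pos p ≠ pos q := by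
  intro heq
  rcases le_total (pos s) (pos t) with hst | hst
  · have := h q hq p hp s hs t ht heq.ge hst
    unfold crossDiff at *
    linarith
  · have := h p hp q hq t ht s hs heq.le hst
    unfold crossDiff at *
    linarith

/-- A ranking can be reversed so as to put a nondegenerate pair in the prescribed direction. -/
theorem SupermodRank.exists_lt (h : SupermodRank pos f X) {p q s t : D}
    (hp : p ∈ X) (hq : q ∈ X) (hs : s ∈ X) (ht : t ∈ X)
    (hc : 0 < crossDiff f p q s t) : ∃ pos' : D → ℤ, SupermodRank pos' f X ∧ pos' p < pos' q := by
  rcases lt_or_gt_of_ne (h.ne hp hq hs ht hc) with hlt | hlt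
  · exact ⟨pos, h, hlt⟩
  · exact ⟨-pos, h.neg, by simpa using hlt⟩

/-- Second differences over nested pairs are monotone. -/
theorem SupermodRank.crossDiff_le (h : SupermodRank pos f X) {m M p q s t : D}
    (hm : m ∈ X) (hM : M ∈ X) (hp : p ∈ X) (hq : q ∈ X) (hs : s ∈ X) (ht : t ∈ X)
    (hmp : pos m ≤ pos p) (hpq : pos p ≤ pos q) (hqM : pos q ≤ pos M)
    (hms : pos m ≤ pos s) (hst : pos s ≤ pos t) (htM : pos t ≤ pos M) :
    crossDiff f p q s t ≤ crossDiff f m M m M := by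
  have h1 := h m hm p hp m hm M hM hmp (hms.trans (hst.trans htM))
  have h2 := h q hq M hM m hm M hM hqM (hms.trans (hst.trans htM))
  have h3 := h p hp q hq m hm s hs hpq hms
  have h4 := h p hp q hq t ht M hM hpq htM
  unfold crossDiff at *
  linarith

end Rank

section Extremes

variable {D : Type*} {f : D → D → ℤ}

theorem exists_extremes (pos : D → ℤ) (a b c d : D) :
    ∃ m ∈ ({a, b, c, d} : Set D), ∃ M ∈ ({a, b, c, d} : Set D),
      ∀ z ∈ ({a, b, c, d} : Set D), pos m ≤ pos z ∧ pos z ≤ pos M := by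
  have hfin : ({a, b, c, d} : Set D).Finite := by simp
  obtain ⟨m, hm, hmin⟩ := Set.exists_min_image _ pos hfin ⟨a, by simp⟩
  obtain ⟨M, hM, hmax⟩ := Set.exists_max_image _ pos hfin ⟨a, by simp⟩
  exact ⟨m, hm, M, hM, fun z hz => ⟨hmin z hz, hmax z hz⟩⟩

/-- If no diagonal second difference is positive, `f` is modular. -/
theorem LocallySupermod.crossDiff_eq_zero (hf : LocallySupermod f)
    (hle : ∀ a b, crossDiff f a b a b ≤ 0) (p q s t : D) : crossDiff f p q s t = 0 := by
  obtain ⟨pos, hpos⟩ := hf p q s t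
  obtain ⟨m, hm, M, hM, hmM⟩ := exists_extremes pos p q s t
  have key : ∀ p' ∈ ({p, q, s, t} : Set D), ∀ q' ∈ ({p, q, s, t} : Set D),
      ∀ s' ∈ ({p, q, s, t} : Set D), ∀ t' ∈ ({p, q, s, t} : Set D),
      pos p' ≤ pos q' → pos s' ≤ pos t' → crossDiff f p' q' s' t' = 0 := by
    intro p' hp q' hq s' hs t' ht hpq hst
    exact le_antisymm ((hpos.crossDiff_le hm hM hp hq hs ht (hmM _ hp).1 hpq (hmM _ hq).2
      (hmM _ hs).1 hst (hmM _ ht).2).trans (hle m M)) (hpos p' hp q' hq s' hs t' ht hpq hst)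
  rcases le_total (pos p) (pos q) with hpq | hpq <;>
    rcases le_total (pos s) (pos t) with hst | hst
  · exact key p (by simp) q (by simp) s (by simp) t (by simp) hpq hst
  · have := key p (by simp) q (by simp) t (by simp) s (by simp) hpq hst
    unfold crossDiff at *
    linarith
  · have := key q (by simp) p (by simp) s (by simp) t (by simp) hpq hst
    unfold crossDiff at *
    linarith
  · have := key q (by simp) p (by simp) t (by simp) s (by simp) hpq hst
    unfold crossDiff at *
    linarith

/-- The four second differences obtained by cutting `(e, g) × (e, g)` at any row and any column
are nonnegative. -/
def IsWide (f : D → D → ℤ) (e g : D) : Prop :=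
  ∀ x y, 0 ≤ crossDiff f e x e y ∧ 0 ≤ crossDiff f x g y g ∧
    0 ≤ crossDiff f e x y g ∧ 0 ≤ crossDiff f x g e y

/-- A pair maximising the diagonal second difference behaves like a minimum and a maximum. -/
theorem LocallySupermod.isWide (hf : LocallySupermod f) {e g : D}
    (hpos : 0 < crossDiff f e g e g)
    (hmax : ∀ a b, crossDiff f a b a b ≤ crossDiff f e g e g) : IsWide f e g := by
  intro x y
  obtain ⟨pos₀, hpos₀⟩ := hf e g x y
  have he : e ∈ ({e, g, x, y} : Set D) := by simp
  have hg : g ∈ ({e, g, x, y} : Set D) := by simp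
  have hx : x ∈ ({e, g, x, y} : Set D) := by simp
  have hy : y ∈ ({e, g, x, y} : Set D) := by simp
  obtain ⟨pos, hr, heg⟩ := hpos₀.exists_lt he hg he hg hpos
  obtain ⟨m, hm, M, hM, hmM⟩ := exists_extremes pos e g x y
  have hmax' := hmax m M
  have below : ∀ z ∈ ({e, g, x, y} : Set D), pos z ≤ pos e →
      ∀ s ∈ ({e, g, x, y} : Set D), ∀ t ∈ ({e, g, x, y} : Set D), pos s ≤ pos t →
      crossDiff f z e s t = 0 ∧ crossDiff f s t z e = 0 := by
    intro z hz hze s hs t ht hst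
    have a1 := hr m hm z hz m hm M hM (hmM _ hz).1 (hmM _ hm).2
    have a2 := hr z hz e he m hm s hs hze (hmM _ hs).1
    have a3 := hr z hz e he t ht M hM hze (hmM _ ht).2
    have a4 := hr z hz e he s hs t ht hze hst
    have a5 := hr e he g hg m hm e he heg.le (hmM _ he).1
    have a6 := hr e he g hg g hg M hM heg.le (hmM _ hg).2
    have a7 := hr g hg M hM m hm M hM (hmM _ hg).2 (hmM _ hm).2
    have b1 := hr m hm M hM m hm z hz (hmM _ hm).2 (hmM _ hz).1
    have b2 := hr m hm s hs z hz e he (hmM _ hs).1 hze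
    have b3 := hr t ht M hM z hz e he (hmM _ ht).2 hze
    have b4 := hr s hs t ht z hz e he hst hze
    have b5 := hr m hm e he e he g hg (hmM _ he).1 heg.le
    have b6 := hr g hg M hM e he g hg (hmM _ hg).2 heg.le
    have b7 := hr m hm M hM g hg M hM (hmM _ hm).2 (hmM _ hg).2
    unfold crossDiff at *
    constructor <;> linarith
  have above : ∀ z ∈ ({e, g, x, y} : Set D), pos g ≤ pos z →
      ∀ s ∈ ({e, g, x, y} : Set D), ∀ t ∈ ({e, g, x, y} : Set D), pos s ≤ pos t →
      crossDiff f g z s t = 0 ∧ crossDiff f s t g z = 0 := by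
    intro z hz hgz s hs t ht hst
    have a1 := hr z hz M hM m hm M hM (hmM _ hz).2 (hmM _ hm).2
    have a2 := hr g hg z hz m hm s hs hgz (hmM _ hs).1
    have a3 := hr g hg z hz t ht M hM hgz (hmM _ ht).2
    have a4 := hr g hg z hz s hs t ht hgz hst
    have a5 := hr e he g hg m hm e he heg.le (hmM _ he).1
    have a6 := hr e he g hg g hg M hM heg.le (hmM _ hg).2
    have a7 := hr m hm e he m hm M hM (hmM _ he).1 (hmM _ hm).2
    have b1 := hr m hm M hM z hz M hM (hmM _ hm).2 (hmM _ hz).2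
    have b2 := hr m hm s hs g hg z hz (hmM _ hs).1 hgz
    have b3 := hr t ht M hM g hg z hz (hmM _ ht).2 hgz
    have b4 := hr s hs t ht g hg z hz hst hgz
    have b5 := hr m hm e he e he g hg (hmM _ he).1 heg.le
    have b6 := hr g hg M hM e he g hg (hmM _ hg).2 heg.le
    have b7 := hr m hm M hM m hm e he (hmM _ hm).2 (hmM _ he).1
    unfold crossDiff at *
    constructor <;> linarith
  have below' : ∀ z ∈ ({e, g, x, y} : Set D), pos z ≤ pos e →
      ∀ s ∈ ({e, g, x, y} : Set D), ∀ t ∈ ({e, g, x, y} : Set D),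
      crossDiff f z e s t = 0 ∧ crossDiff f s t z e = 0 := by
    intro z hz hze s hs t ht
    rcases le_total (pos s) (pos t) with hst | hst
    · exact below z hz hze s hs t ht hst
    · have := below z hz hze t ht s hs hst
      unfold crossDiff at *
      constructor <;> linarith
  have above' : ∀ z ∈ ({e, g, x, y} : Set D), pos g ≤ pos z →
      ∀ s ∈ ({e, g, x, y} : Set D), ∀ t ∈ ({e, g, x, y} : Set D),
      crossDiff f g z s t = 0 ∧ crossDiff f s t g z = 0 := by
    intro z hz hgz s hs t ht
    rcases le_total (pos s) (pos t) with hst | hst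
    · exact above z hz hgz s hs t ht hst
    · have := above z hz hgz t ht s hs hst
      unfold crossDiff at *
      constructor <;> linarith
  refine ⟨?_, ?_, ?_, ?_⟩
  · rcases le_total (pos x) (pos e) with h1 | h1
    · have := below' x hx h1 e he y hy
      unfold crossDiff at *
      linarith
    rcases le_total (pos y) (pos e) with h2 | h2
    · have := below' y hy h2 e he x hx
      unfold crossDiff at *
      linarith
    exact hr e he x hx e he y hy h1 h2
  · rcases le_total (pos g) (pos x) with h1 | h1
    · have := above' x hx h1 y hy g hg
      unfold crossDiff at *
      linarith
    rcases le_total (pos g) (pos y) with h2 | h2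
    · have := above' y hy h2 x hx g hg
      unfold crossDiff at *
      linarith
    exact hr x hx g hg y hy g hg h1 h2
  · rcases le_total (pos x) (pos e) with h1 | h1
    · have := below' x hx h1 y hy g hg
      unfold crossDiff at *
      linarith
    rcases le_total (pos g) (pos y) with h2 | h2
    · have := above' y hy h2 e he x hx
      unfold crossDiff at *
      linarith
    exact hr e he x hx y hy g hg h1 h2
  · rcases le_total (pos g) (pos x) with h1 | h1
    · have := above' x hx h1 e he y hy
      unfold crossDiff at *
      linarith
    rcases le_total (pos y) (pos e) with h2 | h2
    · have := below' y hy h2 x hx g hg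
      unfold crossDiff at *
      linarith
    exact hr x hx g hg e he y hy h1 h2

theorem IsWide.flip {e g : D} (h : IsWide f e g) : IsWide (fun x y => f y x) e g := by
  intro x y
  have := h y x
  unfold crossDiff at *
  refine ⟨?_, ?_, ?_, ?_⟩ <;> linarith

/-- A row in the middle of a wide pair of weight two does not distinguish two middle columns
that can be ranked together with it and the wide pair. -/
theorem SupermodRank.crossDiff_congr_right {pos : D → ℤ} {X : Set D} (h : SupermodRank pos f X)
    {e g x y y' : D} (he : e ∈ X) (hg : g ∈ X) (hx : x ∈ X) (hy : y ∈ X) (hy' : y' ∈ X)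
    (h2 : crossDiff f e g e g = 2) (hrow : crossDiff f e x e g = 1)
    (hcol : crossDiff f e g e y = 1) (hcol' : crossDiff f e g e y' = 1) :
    crossDiff f e x e y = crossDiff f e x e y' := by
  by_contra hne
  obtain ⟨pos', hr, heg⟩ := h.exists_lt he hg he hg (by omega)
  have hex : pos' e < pos' x := hr.lt_of_lt' he hx he hg (by omega) heg
  have hxg : pos' x < pos' g :=
    hr.lt_of_lt' hx hg he hg (by unfold crossDiff at *; omega) heg
  rcases le_total (pos' y) (pos' y') with hyy | hyy
  · have a := hr e he x hx y hy y' hy' hex.le hyy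
    have b := hr x hx g hg y hy y' hy' hxg.le hyy
    unfold crossDiff at *
    omega
  · have a := hr e he x hx y' hy' y hy hex.le hyy
    have b := hr x hx g hg y' hy' y hy hxg.le hyy
    unfold crossDiff at *
    omega

/-- A row in the middle of a wide pair of weight two does not distinguish middle columns. -/
theorem LocallySupermod.crossDiff_congr_right (hf : LocallySupermod f) {e g : D}
    (hw : IsWide f e g) (h2 : crossDiff f e g e g = 2) {x y y' : D}
    (hrow : crossDiff f e x e g = 1)
    (hcol : crossDiff f e g e y = 1) (hcol' : crossDiff f e g e y' = 1) :
    crossDiff f e x e y = crossDiff f e x e y' := by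
  wlog hle : crossDiff f e x e y ≤ crossDiff f e x e y' generalizing y y'
  · exact (this hcol' hcol (not_le.mp hle).le).symm
  by_contra hne
  have w := hw x y
  have w' := hw x y'
  have h0 : crossDiff f e x e y = 0 := by unfold crossDiff at *; omega
  have h1 : crossDiff f e x e y' = 1 := by unfold crossDiff at *; omega
  have same : ∀ z, z = y ∨ z = y' → crossDiff f e z e y = crossDiff f e z e y' := by
    intro z hz
    by_cases hz1 : crossDiff f e z e g = 1
    · obtain ⟨pos, hr⟩ := hf e g y y'
      exact hr.crossDiff_congr_right (by simp) (by simp)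
        (by rcases hz with rfl | rfl <;> simp) (by simp) (by simp) h2 hz1 hcol hcol'
    · have a := hw z y
      have b := hw z y'
      unfold crossDiff at *
      omega
  have sy := same y (Or.inl rfl)
  have sy' := same y' (Or.inr rfl)
  have cyx : 0 < crossDiff f y' x y y' := by unfold crossDiff at *; omega
  have hlow : 1 ≤ crossDiff f e x e x := by
    obtain ⟨pos₀, hr₀⟩ := hf e x y y'
    obtain ⟨pos, hr, hex⟩ := hr₀.exists_lt (p := e) (q := x) (s := e) (t := y')
      (by simp) (by simp) (by simp) (by simp) (by omega)
    have hyy : pos y < pos y' := hr.lt_of_lt (p := e) (q := x) (by simp) (by simp)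
      (by simp) (by simp) (by unfold crossDiff at *; omega) hex
    have hyx : pos y' < pos x := hr.lt_of_lt' (by simp) (by simp) (by simp) (by simp) cyx hyy
    have := hr e (by simp) x (by simp) y' (by simp) x (by simp) hex.le hyx.le
    unfold crossDiff at *
    omega
  have hhigh : crossDiff f e g e x ≤ crossDiff f e x e x := by
    obtain ⟨pos₀, hr₀⟩ := hf g x y y'
    have cgx : 0 < crossDiff f g x y y' := by unfold crossDiff at *; omega
    obtain ⟨pos, hr, hgx⟩ := hr₀.exists_lt (by simp) (by simp) (by simp) (by simp) cgx
    have hyy : pos y < pos y' := hr.lt_of_lt (by simp) (by simp) (by simp) (by simp) cgx hgx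
    have hyx : pos y' < pos x := hr.lt_of_lt' (by simp) (by simp) (by simp) (by simp) cyx hyy
    have := hr g (by simp) x (by simp) y' (by simp) x (by simp) hgx.le hyx.le
    unfold crossDiff at *
    omega
  have wx := hw x x
  have hκ : crossDiff f e g e x = 1 := by unfold crossDiff at *; omega
  obtain ⟨pos, hr⟩ := hf e g x y
  have := hr.crossDiff_congr_right (by simp) (by simp) (by simp) (by simp) (by simp)
    h2 hrow hκ hcol
  omega

/-- All middle entries of a wide pair of weight two agree. -/
theorem LocallySupermod.crossDiff_congr (hf : LocallySupermod f) {e g : D}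
    (hw : IsWide f e g) (h2 : crossDiff f e g e g = 2) {x x' y y' : D}
    (hrow : crossDiff f e x e g = 1) (hrow' : crossDiff f e x' e g = 1)
    (hcol : crossDiff f e g e y = 1) (hcol' : crossDiff f e g e y' = 1) :
    crossDiff f e x e y = crossDiff f e x' e y' := by
  have hflip : ∀ p q s t, crossDiff (fun x y => f y x) p q s t = crossDiff f s t p q := by
    intro p q s t
    unfold crossDiff
    ring
  have a := hf.crossDiff_congr_right hw h2 hrow hcol hcol'
  have b := hf.flip.crossDiff_congr_right hw.flip (x := y') (y := x) (y' := x')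
    (by rw [hflip, h2]) (by rw [hflip, hcol']) (by rw [hflip, hrow]) (by rw [hflip, hrow'])
  rw [hflip, hflip] at b
  exact a.trans b

/-- Relative to a wide pair of weight at most two, second differences are nonnegative over pairs
increasing in the row weight and the column weight. -/
theorem LocallySupermod.crossDiff_nonneg (hf : LocallySupermod f) {e g : D}
    (hw : IsWide f e g) (h2 : crossDiff f e g e g ≤ 2) {x x' y y' : D}
    (hx : crossDiff f e x e g ≤ crossDiff f e x' e g)
    (hy : crossDiff f e g e y ≤ crossDiff f e g e y') : 0 ≤ crossDiff f x x' y y' := by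
  have hmid : ∀ {u u' v v' : D}, crossDiff f e g e g = 2 → crossDiff f e u e g = 1 →
      crossDiff f e u' e g = 1 → crossDiff f e g e v = 1 → crossDiff f e g e v' = 1 →
      crossDiff f e u e v = crossDiff f e u' e v' := fun h => hf.crossDiff_congr hw h
  have expand : crossDiff f x x' y y' = crossDiff f e x e y + crossDiff f e x' e y'
      - crossDiff f e x e y' - crossDiff f e x' e y := by
    unfold crossDiff
    ring
  have bounds : ∀ u v, 0 ≤ crossDiff f e u e v ∧
      crossDiff f e u e v ≤ crossDiff f e u e g ∧ crossDiff f e u e v ≤ crossDiff f e g e v ∧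
      crossDiff f e u e g + crossDiff f e g e v - crossDiff f e g e g ≤ crossDiff f e u e v := by
    intro u v
    have := hw u v
    unfold crossDiff at *
    omega
  have b1 := bounds x y
  have b2 := bounds x y'
  have b3 := bounds x' y
  have b4 := bounds x' y'
  have m1 := @hmid x x' y y'
  have m2 := @hmid x x y y'
  have m3 := @hmid x x' y y
  have m4 := @hmid x x' y' y'
  have m5 := @hmid x' x' y y'
  rw [expand]
  clear expand bounds hmid
  generalize crossDiff f e g e g = δ at *
  generalize crossDiff f e x e g = r at *
  generalize crossDiff f e x' e g = r' at *
  generalize crossDiff f e g e y = k at *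
  generalize crossDiff f e g e y' = k' at *
  omega

end Extremes

section Profile

variable {D : Type*}

/-- A height function certifying the orders on which `f` is supermodular: second differences are
nonnegative along increasing heights, and every pair of distinct heights is tied by a positive
second difference to every pair of a lowest and a highest element. -/
structure Profile (f : D → D → ℤ) (τ : D → ℤ) : Prop where
  nonneg : ∀ x x' y y', τ x ≤ τ x' → τ y ≤ τ y' → 0 ≤ crossDiff f x x' y y'
  linked : ∀ a b, (∀ z, τ a ≤ τ z) → (∀ z, τ z ≤ τ b) → ∀ x y, τ x < τ y →
    0 < crossDiff f x y a b ∨ 0 < crossDiff f a b x y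
  nonconst : ∃ x y, τ x < τ y

theorem LocallySupermod.exists_profile [Finite D] {f : D → D → ℤ} (hf : LocallySupermod f)
    (h01 : ∀ x y, f x y = 0 ∨ f x y = 1) :
    (∀ p q s t, crossDiff f p q s t = 0) ∨ ∃ τ : D → ℤ, Profile f τ := by
  by_cases hle : ∀ a b, crossDiff f a b a b ≤ 0
  · exact Or.inl (hf.crossDiff_eq_zero hle)
  right
  push Not at hle
  obtain ⟨a₀, b₀, h₀⟩ := hle
  have : Nonempty (D × D) := ⟨(a₀, b₀)⟩
  obtain ⟨⟨e, g⟩, hmax'⟩ := Finite.exists_max fun p : D × D => crossDiff f p.1 p.2 p.1 p.2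
  have hmax : ∀ a b, crossDiff f a b a b ≤ crossDiff f e g e g := fun a b => hmax' (a, b)
  have hδ : 0 < crossDiff f e g e g := h₀.trans_le (hmax a₀ b₀)
  have hw := hf.isWide hδ hmax
  have hδ2 : crossDiff f e g e g ≤ 2 := by
    have := h01 e e
    have := h01 g g
    have := h01 e g
    have := h01 g e
    unfold crossDiff
    omega
  have noncross : ∀ x y, crossDiff f e x e g < crossDiff f e y e g →
      crossDiff f e g e x ≤ crossDiff f e g e y := by
    intro x y hxy
    by_contra hcon
    obtain ⟨pos₀, hr₀⟩ := hf e g x y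
    obtain ⟨pos, hr, heg⟩ := hr₀.exists_lt (by simp) (by simp) (by simp) (by simp) hδ
    have h1 : pos x < pos y := hr.lt_of_lt' (s := e) (t := g) (by simp) (by simp) (by simp)
      (by simp) (by unfold crossDiff at *; omega) heg
    have h2 : pos y < pos x := hr.lt_of_lt (p := e) (q := g) (by simp) (by simp) (by simp)
      (by simp) (by unfold crossDiff at *; omega) heg
    omega
  have bounds : ∀ u v, 0 ≤ crossDiff f e u e v ∧
      crossDiff f e u e v ≤ crossDiff f e u e g ∧ crossDiff f e u e v ≤ crossDiff f e g e v ∧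
      crossDiff f e u e g + crossDiff f e g e v - crossDiff f e g e g ≤ crossDiff f e u e v := by
    intro u v
    have := hw u v
    unfold crossDiff at *
    omega
  have hee : crossDiff f e e e g = 0 ∧ crossDiff f e g e e = 0 := by
    unfold crossDiff
    omega
  refine ⟨fun x => crossDiff f e x e g + crossDiff f e g e x, ?_, ?_, ?_⟩
  · intro x x' y y' hx hy
    have n1 := noncross x' x
    have n2 := noncross y y'
    exact hf.crossDiff_nonneg hw hδ2 (by omega) (by omega)
  · intro a b ha hb x y hxy
    have ha' := ha e
    have hb' := hb g
    have e1 : crossDiff f x y a b = crossDiff f e x e a + crossDiff f e y e b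
      - crossDiff f e x e b - crossDiff f e y e a := by unfold crossDiff; ring
    have e2 : crossDiff f a b x y = crossDiff f e a e x + crossDiff f e b e y
      - crossDiff f e a e y - crossDiff f e b e x := by unfold crossDiff; ring
    have := bounds x a
    have := bounds x b
    have := bounds y a
    have := bounds y b
    have := bounds a x
    have := bounds a y
    have := bounds b x
    have := bounds b y
    have ba := bounds a g
    have ba' := bounds g a
    have bb := bounds b g
    have bb' := bounds g b
    omega
  · exact ⟨e, g, by omega⟩

variable {f g k : D → D → ℤ} {τ σ υ : D → ℤ}

theorem Profile.neg (h : Profile f τ) : Profile f (-τ) where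
  nonneg x x' y y' hx hy := by
    have := h.nonneg x' x y' y (by simpa using hx) (by simpa using hy)
    unfold crossDiff at *
    linarith
  linked a b ha hb x y hxy := by
    have := h.linked b a (fun z => by simpa using hb z) (fun z => by simpa using ha z) y x
      (by simpa using hxy)
    unfold crossDiff at *
    omega
  nonconst := by
    obtain ⟨x, y, hxy⟩ := h.nonconst
    exact ⟨y, x, by simpa using hxy⟩

/-- A ranking respects a profile once it puts a lowest and a highest element in the right
direction. -/
theorem Profile.pos_lt (h : Profile f τ) {pos : D → ℤ} {X : Set D} (hr : SupermodRank pos f X)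
    {a b x y : D} (haX : a ∈ X) (hbX : b ∈ X) (hxX : x ∈ X) (hyX : y ∈ X)
    (ha : ∀ z, τ a ≤ τ z) (hb : ∀ z, τ z ≤ τ b) (hab : pos a < pos b) (hxy : τ x < τ y) :
    pos x < pos y := by
  rcases h.linked a b ha hb x y hxy with hc | hc
  · exact hr.lt_of_lt' hxX hyX haX hbX hc hab
  · exact hr.lt_of_lt haX hbX hxX hyX hc hab

theorem Profile.min_lt_max (h : Profile f τ) {a b : D}
    (ha : ∀ z, τ a ≤ τ z) (hb : ∀ z, τ z ≤ τ b) : τ a < τ b := by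
  obtain ⟨x, y, hxy⟩ := h.nonconst
  exact (ha x).trans_lt (hxy.trans_le (hb y))

theorem Profile.pos_ne (h : Profile f τ) {pos : D → ℤ} {X : Set D} (hr : SupermodRank pos f X)
    {a b : D} (haX : a ∈ X) (hbX : b ∈ X)
    (ha : ∀ z, τ a ≤ τ z) (hb : ∀ z, τ z ≤ τ b) : pos a ≠ pos b := by
  rcases h.linked a b ha hb a b (h.min_lt_max ha hb) with hc | hc <;>
  exact hr.ne haX hbX haX hbX hc

theorem Profile.exists_min_max [Finite D] (h : Profile f τ) :
    ∃ a b, (∀ z, τ a ≤ τ z) ∧ ∀ z, τ z ≤ τ b := by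
  obtain ⟨x, -⟩ := h.nonconst
  have : Nonempty D := ⟨x⟩
  obtain ⟨a, ha⟩ := Finite.exists_min τ
  obtain ⟨b, hb⟩ := Finite.exists_max τ
  exact ⟨a, b, ha, hb⟩

/-- Two height functions have a common lowest and a common highest element. -/
def Aligned (τ σ : D → ℤ) : Prop :=
  (∃ a, (∀ z, τ a ≤ τ z) ∧ ∀ z, σ a ≤ σ z) ∧ ∃ b, (∀ z, τ z ≤ τ b) ∧ ∀ z, σ z ≤ σ b

/-- Any four elements can be ranked so that all members of `S` are supermodular on them. -/
def JointlySupermod (S : Set (D → D → ℤ)) : Prop :=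
  ∀ a b c d : D, ∃ pos : D → ℤ, ∀ f ∈ S, SupermodRank pos f {a, b, c, d}

theorem Profile.aligned_of_pos_lt (hf : Profile f τ) (hg : Profile g σ) {pos : D → ℤ} {a b c d : D}
    (hrf : SupermodRank pos f {a, b, c, d}) (hrg : SupermodRank pos g {a, b, c, d})
    (ha : ∀ z, τ a ≤ τ z) (hb : ∀ z, τ z ≤ τ b) (hc : ∀ z, σ c ≤ σ z) (hd : ∀ z, σ z ≤ σ d)
    (hab : pos a < pos b) (hcd : pos c < pos d) : Aligned τ σ := by
  constructor
  · by_cases h1 : τ c ≤ τ a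
    · exact ⟨c, fun z => h1.trans (ha z), hc⟩
    by_cases h2 : σ a ≤ σ c
    · exact ⟨a, ha, fun z => h2.trans (hc z)⟩
    have := hf.pos_lt hrf (by simp) (by simp) (by simp) (by simp) ha hb hab (not_le.mp h1)
    have := hg.pos_lt hrg (by simp) (by simp) (by simp) (by simp) hc hd hcd (not_le.mp h2)
    omega
  · by_cases h1 : τ b ≤ τ d
    · exact ⟨d, fun z => (hb z).trans h1, hd⟩
    by_cases h2 : σ d ≤ σ b
    · exact ⟨b, hb, fun z => (hd z).trans h2⟩
    have := hf.pos_lt hrf (by simp) (by simp) (by simp) (by simp) ha hb hab (not_le.mp h1)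
    have := hg.pos_lt hrg (by simp) (by simp) (by simp) (by simp) hc hd hcd (not_le.mp h2)
    omega

theorem Profile.aligned_or [Finite D] (hf : Profile f τ) (hg : Profile g σ)
    (hloc : JointlySupermod {f, g}) : Aligned τ σ ∨ Aligned τ (-σ) := by
  obtain ⟨a, b, ha, hb⟩ := hf.exists_min_max
  obtain ⟨c, d, hc, hd⟩ := hg.exists_min_max
  obtain ⟨pos, hr, hab⟩ : ∃ pos : D → ℤ,
      (∀ k ∈ ({f, g} : Set (D → D → ℤ)), SupermodRank pos k {a, b, c, d}) ∧ pos a < pos b := by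
    obtain ⟨pos, hr⟩ := hloc a b c d
    rcases lt_or_gt_of_ne (hf.pos_ne (hr f (by simp)) (by simp) (by simp) ha hb) with h | h
    · exact ⟨pos, hr, h⟩
    · exact ⟨-pos, fun k hk => (hr k hk).neg, by simpa using h⟩
  have hrf := hr f (by simp)
  have hrg := hr g (by simp)
  rcases lt_or_gt_of_ne (hg.pos_ne hrg (by simp) (by simp) hc hd) with h | h
  · exact Or.inl (hf.aligned_of_pos_lt hg hrf hrg ha hb hc hd hab h)
  · rw [show ({a, b, c, d} : Set D) = {a, b, d, c} by rw [Set.pair_comm c d]] at hrf hrg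
    exact Or.inr (hf.aligned_of_pos_lt hg.neg hrf hrg ha hb (fun z => by simpa using hd z)
      (fun z => by simpa using hc z) hab h)

/-- Aligned profiles never order two elements oppositely. -/
theorem Profile.le_of_lt (hf : Profile f τ) (hg : Profile g σ)
    (hloc : JointlySupermod {f, g}) (hal : Aligned τ σ) {x y : D} (hxy : τ x < τ y) :
    σ x ≤ σ y := by
  obtain ⟨⟨a, haτ, haσ⟩, b, hbτ, hbσ⟩ := hal
  by_contra hcon
  obtain ⟨pos, hr⟩ := hloc a b x y
  have hrf := hr f (by simp)
  have hrg := hr g (by simp)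
  rcases lt_or_gt_of_ne (hf.pos_ne hrf (by simp) (by simp) haτ hbτ) with h | h
  · have := hf.pos_lt hrf (by simp) (by simp) (by simp) (by simp) haτ hbτ h hxy
    have := hg.pos_lt hrg (by simp) (by simp) (by simp) (by simp) haσ hbσ h (not_le.mp hcon)
    omega
  · have h' : (-pos) a < (-pos) b := by simpa using h
    have := hf.pos_lt hrf.neg (by simp) (by simp) (by simp) (by simp) haτ hbτ h' hxy
    have := hg.pos_lt hrg.neg (by simp) (by simp) (by simp) (by simp) haσ hbσ h' (not_le.mp hcon)
    omega

/-- A configuration of three profiles on three elements that no ranking can realise. -/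
theorem Profile.false_of_cyclic (hf : Profile f τ) (hg : Profile g σ) (hk : Profile k υ)
    (hloc : JointlySupermod {f, g, k}) {p q b : D}
    (hpτ : ∀ z, τ p ≤ τ z) (hqτ : ∀ z, τ q ≤ τ z) (hbτ : ∀ z, τ z ≤ τ b)
    (hpσ : ∀ z, σ p ≤ σ z) (hqσ : ∀ z, σ z ≤ σ q) (hbσ : ∀ z, σ z ≤ σ b)
    (hqυ : ∀ z, υ q ≤ υ z) (hpυ : ∀ z, υ z ≤ υ p) (hbυ : ∀ z, υ z ≤ υ b) : False := by
  obtain ⟨pos, hr, hpb⟩ : ∃ pos : D → ℤ,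
      (∀ l ∈ ({f, g, k} : Set (D → D → ℤ)), SupermodRank pos l {p, b, q, q}) ∧
        pos p < pos b := by
    obtain ⟨pos, hr⟩ := hloc p b q q
    rcases lt_or_gt_of_ne (hf.pos_ne (hr f (by simp)) (by simp) (by simp) hpτ hbτ) with h | h
    · exact ⟨pos, hr, h⟩
    · exact ⟨-pos, fun l hl => (hr l hl).neg, by simpa using h⟩
  have hqb := hf.pos_lt (hr f (by simp)) (by simp) (by simp) (by simp) (by simp) hpτ hbτ hpb
    (hf.min_lt_max hqτ hbτ)
  have hpq := hg.pos_lt (hr g (by simp)) (by simp) (by simp) (by simp) (by simp) hpσ hbσ hpb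
    (hg.min_lt_max hpσ hqσ)
  have hqp := hk.pos_lt (hr k (by simp)) (by simp) (by simp) (by simp) (by simp) hqυ hbυ hqb
    (hk.min_lt_max hqυ hpυ)
  omega

theorem JointlySupermod.mono {S T : Set (D → D → ℤ)} (h : JointlySupermod T) (hST : S ⊆ T) :
    JointlySupermod S := fun a b c d =>
  (h a b c d).imp fun _ hr f hf => hr f (hST hf)

/-- Two profiles aligned with a third one are aligned. -/
theorem Profile.aligned_trans [Finite D] (hf : Profile f τ) (hg : Profile g σ) (hk : Profile k υ)
    (hloc : JointlySupermod {f, g, k}) (hσ : Aligned τ σ) (hυ : Aligned τ υ) : Aligned σ υ := by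
  have hfg : JointlySupermod {f, g} := hloc.mono (by grind)
  have hfk : JointlySupermod {f, k} := hloc.mono (by grind)
  have hgf : JointlySupermod {g, f} := hloc.mono (by grind)
  have hkf : JointlySupermod {k, f} := hloc.mono (by grind)
  have hgk : JointlySupermod {g, k} := hloc.mono (by grind)
  rcases hg.aligned_or hk hgk with h | ⟨⟨p, hpσ, hpυ⟩, q, hqσ, hqυ⟩
  · exact h
  replace hpυ : ∀ z, υ z ≤ υ p := fun z => by simpa using hpυ z
  replace hqυ : ∀ z, υ q ≤ υ z := fun z => by simpa using hqυ z
  have hpq : τ p = τ q := by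
    apply le_antisymm
    · by_contra hcon
      have := hf.le_of_lt hg hfg hσ (not_le.mp hcon)
      exact absurd (hg.min_lt_max hpσ hqσ) (by omega)
    · by_contra hcon
      have := hf.le_of_lt hk hfk hυ (not_le.mp hcon)
      exact absurd (hk.min_lt_max hqυ hpυ) (by omega)
  obtain ⟨a, b, ha, hb⟩ := hf.exists_min_max
  have habove : τ p < τ b → (∀ z, σ z ≤ σ b) ∧ ∀ z, υ z ≤ υ b := fun h =>
    ⟨fun z => (hqσ z).trans (hf.le_of_lt hg hfg hσ (hpq ▸ h)),
      fun z => (hpυ z).trans (hf.le_of_lt hk hfk hυ h)⟩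
  have hbelow : τ a < τ p → (∀ z, σ a ≤ σ z) ∧ ∀ z, υ a ≤ υ z := fun h =>
    ⟨fun z => (hf.le_of_lt hg hfg hσ h).trans (hpσ z),
      fun z => (hf.le_of_lt hk hfk hυ (hpq ▸ h)).trans (hqυ z)⟩
  by_cases h1 : τ p < τ b
  · by_cases h2 : τ a < τ p
    · exact ⟨⟨a, hbelow h2⟩, b, habove h1⟩
    · have hp : ∀ z, τ p ≤ τ z := fun z => (not_lt.mp h2).trans (ha z)
      exact (hf.false_of_cyclic hg hk hloc hp (hpq ▸ hp) hb hpσ hqσ (habove h1).1 hqυ hpυ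
        (habove h1).2).elim
  · have h2 : τ a < τ p := (hf.min_lt_max ha hb).trans_le (not_lt.mp h1)
    have hp : ∀ z, τ z ≤ τ p := fun z => (hb z).trans (not_lt.mp h1)
    have hn : ∀ {ρ : D → ℤ} {u : D}, (∀ z, ρ z ≤ ρ u) → ∀ z, (-ρ) u ≤ (-ρ) z :=
      fun h z => by simpa using h z
    have hn' : ∀ {ρ : D → ℤ} {u : D}, (∀ z, ρ u ≤ ρ z) → ∀ z, (-ρ) z ≤ (-ρ) u :=
      fun h z => by simpa using h z
    exact (hf.neg.false_of_cyclic hg.neg hk.neg hloc (p := q) (q := p) (b := a)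
      (hn (hpq ▸ hp)) (hn hp) (hn' ha) (hn hqσ) (hn' hpσ) (hn' (hbelow h2).1)
      (hn hpυ) (hn' hqυ) (hn' (hbelow h2).2)).elim

/-- If any three members of `F` can be jointly ranked on any four elements, then `D` carries height
functions, one for each member of `F`, that never order two elements oppositely. -/
theorem exists_coherent_heights [Finite D] (F : Finset (D → D → ℤ))
    (h01 : ∀ f ∈ F, ∀ x y, f x y = 0 ∨ f x y = 1)
    (hloc : ∀ f ∈ F, ∀ g ∈ F, ∀ k ∈ F, JointlySupermod {f, g, k}) :
    ∃ τ : (D → D → ℤ) → D → ℤ,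
      (∀ f ∈ F, ∀ x x' y y', τ f x ≤ τ f x' → τ f y ≤ τ f y' → 0 ≤ crossDiff f x x' y y') ∧
      ∀ f ∈ F, ∀ g ∈ F, ∀ x y, τ f x < τ f y → τ g x ≤ τ g y := by
  have hprof : ∀ f ∈ F, (∀ p q s t, crossDiff f p q s t = 0) ∨ ∃ τ : D → ℤ, Profile f τ :=
    fun f hf => LocallySupermod.exists_profile (fun a b c d =>
      (hloc f hf f hf f hf a b c d).imp fun _ hr => hr f (by simp)) (h01 f hf)
  by_cases htriv : ∀ f ∈ F, ∀ p q s t, crossDiff f p q s t = 0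
  · exact ⟨fun _ _ => 0, fun f hf x x' y y' _ _ => (htriv f hf x x' y y').ge,
      fun _ _ _ _ _ _ h => absurd h (lt_irrefl _)⟩
  push Not at htriv
  obtain ⟨f₀, hf₀, hne⟩ := htriv
  obtain ⟨τ₀, h₀⟩ : ∃ τ : D → ℤ, Profile f₀ τ := (hprof f₀ hf₀).resolve_left (by
    obtain ⟨p, q, s, t, h⟩ := hne
    exact fun hz => h (hz p q s t))
  have hchoose : ∀ f, ∃ τ : D → ℤ, f ∈ F →
      ((∀ p q s t, crossDiff f p q s t = 0) ∧ τ = 0) ∨ (Profile f τ ∧ Aligned τ₀ τ) := by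
    intro f
    by_cases hf : f ∈ F
    · rcases hprof f hf with h | ⟨τ, h⟩
      · exact ⟨0, fun _ => Or.inl ⟨h, rfl⟩⟩
      · rcases h₀.aligned_or h ((hloc f₀ hf₀ f hf f hf).mono (by grind)) with hal | hal
        · exact ⟨τ, fun _ => Or.inr ⟨h, hal⟩⟩
        · exact ⟨-τ, fun _ => Or.inr ⟨h.neg, hal⟩⟩
    · exact ⟨0, fun h => absurd h hf⟩
  choose τ hτ using hchoose
  refine ⟨τ, fun f hf x x' y y' hx hy => ?_, fun f hf g hg x y hxy => ?_⟩
  · rcases hτ f hf with ⟨h, -⟩ | ⟨h, -⟩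
    · exact (h x x' y y').ge
    · exact h.nonneg x x' y y' hx hy
  · rcases hτ f hf with ⟨-, h⟩ | ⟨h, hal⟩
    · simp [h] at hxy
    rcases hτ g hg with ⟨-, h'⟩ | ⟨h', hal'⟩
    · simp [h']
    · exact h.le_of_lt h' ((hloc f hf g hg g hg).mono (by grind))
        (h₀.aligned_trans h h' (hloc f₀ hf₀ f hf g hg) hal hal') hxy

end Profile

section Chain

variable {D : Type*}

theorem SupermodChain2.of_crossDiff_nonneg {r : LinearOrder D} {f : D → D → ℤ}
    (h : ∀ x x' y y', r.le x x' → r.le y y' → 0 ≤ crossDiff f x x' y y') :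
    SupermodChain2 r f := by
  intro x₁ y₁ x₂ y₂
  rcases r.le_total x₁ x₂ with hx | hx <;> rcases r.le_total y₁ y₂ with hy | hy
  · rw [min_eq_left hx, min_eq_left hy, max_eq_right hx, max_eq_right hy]
  · rw [min_eq_left hx, min_eq_right hy, max_eq_right hx, max_eq_left hy]
    have := h _ _ _ _ hx hy
    unfold crossDiff at this
    linarith
  · rw [min_eq_right hx, min_eq_left hy, max_eq_left hx, max_eq_right hy]
    have := h _ _ _ _ hx hy
    unfold crossDiff at this
    linarith
  · rw [min_eq_right hx, min_eq_right hy, max_eq_left hx, max_eq_left hy, add_comm]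

theorem SupermodChain2.crossDiff_nonneg {r : LinearOrder D} {f : D → D → ℤ}
    (h : SupermodChain2 r f) {x x' y y' : D} (hx : r.le x x') (hy : r.le y y') :
    0 ≤ crossDiff f x x' y y' := by
  have := h x y' x' y
  rw [min_eq_left hx, min_eq_right hy, max_eq_right hx, max_eq_left hy] at this
  unfold crossDiff
  linarith

/-- A chain on a finite subset yields a ranking. -/
theorem exists_supermodRank (D' : Finset D) (r : LinearOrder D') :
    ∃ pos : D → ℤ, ∀ f : D → D → ℤ,
      SupermodChain2 r (fun x y : D' => f x.1 y.1) → SupermodRank pos f D' := by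
  classical
  let φ := (monoEquivOfFin D' rfl).symm
  refine ⟨fun x => if hx : x ∈ D' then ((φ ⟨x, hx⟩ : ℕ) : ℤ) else 0, ?_⟩
  intro f hf p hp q hq s hs t ht hpq hst
  rw [Finset.mem_coe] at hp hq hs ht
  simp only [hp, hq, hs, ht, dif_pos, Nat.cast_le, Fin.val_fin_le, φ.le_iff_le] at hpq hst
  exact hf.crossDiff_nonneg hpq hst

/-- Height functions that never order two elements oppositely are monotone on a common chain. -/
theorem exists_linearOrder_of_coherent [Finite D] {ι : Type*} (F : Finset ι) (τ : ι → D → ℤ)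
    (h : ∀ i ∈ F, ∀ j ∈ F, ∀ x y, τ i x < τ i y → τ j x ≤ τ j y) :
    ∃ r : LinearOrder D, ∀ i ∈ F, ∀ x y, r.le x y → τ i x ≤ τ i y := by
  obtain ⟨n, ⟨e⟩⟩ := Finite.exists_equiv_fin D
  let key : D → ℤ ×ₗ Fin n := fun x => toLex (∑ i ∈ F, τ i x, e x)
  have hkey : Function.Injective key := fun x y hxy =>
    e.injective (congrArg (fun z => (ofLex z).2) hxy)
  refine ⟨LinearOrder.lift' key hkey, fun i hi x y hxy => ?_⟩
  by_contra hcon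
  have hlt : ∑ j ∈ F, τ j y < ∑ j ∈ F, τ j x :=
    Finset.sum_lt_sum (fun j hj => h i hi j hj y x (not_le.mp hcon)) ⟨i, hi, not_le.mp hcon⟩
  have hle : key x ≤ key y := hxy
  rw [Prod.Lex.le_iff] at hle
  change ∑ j ∈ F, τ j x < ∑ j ∈ F, τ j y ∨ ∑ j ∈ F, τ j x = ∑ j ∈ F, τ j y ∧ _ at hle
  omega

end Chain

/-- If a finite set `F` of binary predicates on a finite set `D` is
not supermodular on any chain on `D`, then there are `F' ⊆ F` with `|F'| ≤ 3` and
`D' ⊆ D` with `|D'| ≤ 4` such that the restrictions of the members of `F'` to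
`D' × D'` are not supermodular on any chain on `D'`. -/
theorem not_supermodular_small_witness
    {D : Type*} [Fintype D] [DecidableEq D]
    (F : Finset (D → D → ℤ))
    (h01 : ∀ f ∈ F, ∀ x y, f x y = 0 ∨ f x y = 1)
    (h : ¬ ∃ r : LinearOrder D, ∀ f ∈ F, SupermodChain2 r f) :
    ∃ F' ⊆ F, F'.card ≤ 3 ∧
      ∃ D' : Finset D, D'.card ≤ 4 ∧
        ¬ ∃ r : LinearOrder ↥D', ∀ f ∈ F',
            SupermodChain2 r (fun x y : ↥D' => f x.1 y.1) := by
  classical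
  by_contra hsmall
  apply h
  have hloc : ∀ f ∈ F, ∀ g ∈ F, ∀ k ∈ F, JointlySupermod {f, g, k} := by
    intro f hf g hg k hk a b c d
    by_contra hno
    refine hsmall ⟨{f, g, k}, by grind, Finset.card_le_three,
      {a, b, c, d}, Finset.card_le_four, ?_⟩
    rintro ⟨r, hr⟩
    obtain ⟨pos, hpos⟩ := exists_supermodRank _ r
    refine hno ⟨pos, fun l hl => ?_⟩
    simpa using hpos l (hr l (by simpa using hl))
  obtain ⟨τ, hτ, hcoh⟩ := exists_coherent_heights F h01 hloc
  obtain ⟨r, hr⟩ := exists_linearOrder_of_coherent F τ hcoh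
  exact ⟨r, fun f hf => .of_crossDiff_nonneg fun x x' y y' hx hy =>
    hτ f hf x x' y y' (hr f hf x x' hx) (hr f hf y y' hy)⟩
end

section
/- Let D = {0,1,2,3} and let F = {f_1, f_2, f_3} be any set of three pairwise distinct binary predicates on D. Then at least one of the following holds: (1) F is supermodular on some chain on D; (2) for some proper subset D' ⊂ D, the set of restrictions of the members of F to D'×D' is not supermodular on any chain on D'; (3) some proper nonempty subset of F is not supermodular on any chain on D. In particular, there is no set F of three binary predicates on a four-element domain such that F is not supermodular on any chain, every proper nonempty subset of F is supermodular on some chain, and for every proper subset D' ⊂ D the restriction of F to D' is supermodular on some chain on D'. -/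
/-- Representatives, up to reversal, of the chains on `Fin 4` (the first twelve entries) and of
the chains on the complement of `{d}` (the three entries from position `12 + 3 * d`). -/
def chains : List (List (Fin 4)) :=
  [[0, 1, 2, 3], [0, 1, 3, 2], [0, 2, 1, 3], [0, 2, 3, 1], [0, 3, 1, 2], [0, 3, 2, 1],
   [1, 0, 2, 3], [1, 0, 3, 2], [1, 2, 0, 3], [1, 3, 0, 2], [2, 0, 1, 3], [2, 1, 0, 3],
   [1, 2, 3], [1, 3, 2], [2, 1, 3], [0, 2, 3], [0, 3, 2], [2, 0, 3],
   [0, 1, 3], [0, 3, 1], [1, 0, 3], [0, 1, 2], [0, 2, 1], [1, 0, 2]]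

/-- The `k`-th representative chain. -/
def chain (k : ℕ) : List (Fin 4) := chains.getD k []

/-- Supermodularity of `f` on the elements of `l`, ordered by their position in `l`. -/
def SupermodList (l : List (Fin 4)) (f : Fin 4 → Fin 4 → ℤ) : Prop :=
  ∀ x₁ x₂ y₁ y₂, [x₁, x₂].Sublist l → [y₁, y₂].Sublist l →
    f x₁ y₂ + f x₂ y₁ ≤ f x₁ y₁ + f x₂ y₂

theorem SupermodList.of_reverse {l : List (Fin 4)} {f : Fin 4 → Fin 4 → ℤ}
    (h : SupermodList l.reverse f) : SupermodList l f := by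
  intro x₁ x₂ y₁ y₂ hx hy
  have := h x₂ x₁ y₂ y₁ (by simpa using hx.reverse) (by simpa using hy.reverse)
  linarith

/-- A chain on a finite type embedded in `Fin 4` can be listed increasingly. -/
theorem exists_list_supermodList {D : Type*} [Fintype D] (r : LinearOrder D) (e : D → Fin 4)
    (he : Function.Injective e) :
    ∃ l : List (Fin 4), l.Nodup ∧ (∀ x, x ∈ l ↔ x ∈ Set.range e) ∧
      ∀ f : Fin 4 → Fin 4 → ℤ,
        SupermodChain2 r (fun x y => f (e x) (e y)) → SupermodList l f := by
  classical
  let := r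
  refine ⟨((Finset.univ : Finset D).sort (· ≤ ·)).map e,
    (Finset.sort_nodup _ _).map he, by simp, fun f hf => ?_⟩
  have key : ∀ x₁ x₂, [x₁, x₂].Sublist (((Finset.univ : Finset D).sort (· ≤ ·)).map e) →
      ∃ a b, a ≤ b ∧ e a = x₁ ∧ e b = x₂ := by
    intro x₁ x₂ h
    obtain ⟨l', hl', hmap⟩ := List.sublist_map_iff.1 h
    obtain ⟨a, t, rfl, ha, ht⟩ := List.map_eq_cons_iff.1 hmap.symm
    obtain ⟨b, t', rfl, hb, ht'⟩ := List.map_eq_cons_iff.1 ht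
    obtain rfl := List.map_eq_nil_iff.1 ht'
    exact ⟨a, b, List.pairwise_iff_forall_sublist.1 (Finset.pairwise_sort _ _) hl', ha, hb⟩
  intro x₁ x₂ y₁ y₂ hx hy
  obtain ⟨a, b, hab, rfl, rfl⟩ := key _ _ hx
  obtain ⟨c, d, hcd, rfl, rfl⟩ := key _ _ hy
  have := hf a d b c
  have h1 : r.min a b = a := min_eq_left hab
  have h2 : r.max a b = b := max_eq_right hab
  have h3 : r.min d c = c := min_eq_right hcd
  have h4 : r.max d c = d := max_eq_left hcd
  simpa only [h1, h2, h3, h4] using this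

/-- Every chain on `Fin 4` is one of the first twelve representatives, up to reversal. -/
theorem exists_chain_of_linearOrder (r : LinearOrder (Fin 4)) :
    ∃ k < 12, ∀ f, SupermodChain2 r f → SupermodList (chain k) f := by
  obtain ⟨l, hnd, hmem, hl⟩ := exists_list_supermodList r id Function.injective_id
  have hperm : l.Perm [0, 1, 2, 3] :=
    (List.perm_ext_iff_of_nodup hnd (by decide)).2 fun x => by
      rw [hmem]; revert x; simp [Fin.forall_fin_succ]
  have hcov : ∀ l ∈ List.permutations' ([0, 1, 2, 3] : List (Fin 4)),
      ∃ k < 12, l = chain k ∨ l = (chain k).reverse := by decide +kernel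
  obtain ⟨k, hk, rfl | rfl⟩ := hcov l (List.mem_permutations'.2 hperm)
  · exact ⟨k, hk, hl⟩
  · exact ⟨k, hk, fun f hf => (hl f hf).of_reverse⟩

/-- Every chain on the complement of `{d}` is one of three representatives, up to reversal. -/
theorem exists_chain_of_linearOrder_compl (d : Fin 4)
    (r : LinearOrder ↥(Finset.univ.erase d : Finset (Fin 4))) :
    ∃ i < 3, ∀ f : Fin 4 → Fin 4 → ℤ, SupermodChain2 r (fun x y => f x.1 y.1) →
      SupermodList (chain (12 + 3 * d + i)) f := by
  obtain ⟨l, hnd, hmem, hl⟩ := exists_list_supermodList r Subtype.val Subtype.val_injective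
  have hperm : l.Perm ((List.finRange 4).erase d) :=
    (List.perm_ext_iff_of_nodup hnd ((List.nodup_finRange 4).erase d)).2 fun x => by
      rw [hmem, (List.nodup_finRange 4).mem_erase_iff]; simp
  have hcov : ∀ d : Fin 4, ∀ l ∈ List.permutations' ((List.finRange 4).erase d),
      ∃ i < 3, l = chain (12 + 3 * d + i) ∨ l = (chain (12 + 3 * d + i)).reverse := by
    decide +kernel
  obtain ⟨i, hi, rfl | rfl⟩ := hcov d l (List.mem_permutations'.2 hperm)
  · exact ⟨i, hi, hl⟩
  · exact ⟨i, hi, fun f hf => (hl f hf).of_reverse⟩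

/-- Each of the first twelve representatives comes from a linear order on `Fin 4`. -/
theorem exists_linearOrder_of_chain {k : ℕ} (hk : k < 12) :
    ∃ r : LinearOrder (Fin 4), ∀ f, SupermodList (chain k) f → SupermodChain2 r f := by
  have hinj : ∀ k < 12, Function.Injective fun x => (chain k).idxOf x := by
    unfold Function.Injective; decide +kernel
  have hsub : ∀ k < 12, ∀ x y, (chain k).idxOf x < (chain k).idxOf y →
      [x, y].Sublist (chain k) := by decide +kernel
  let r : LinearOrder (Fin 4) := LinearOrder.lift' _ (hinj k hk)
  have hlt : ∀ x y, r.lt x y → [x, y].Sublist (chain k) := fun x y h => hsub k hk x y h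
  refine ⟨r, fun f hf x₁ y₁ x₂ y₂ => ?_⟩
  clear_value r
  have hmin : ∀ x y, r.le x y → r.min x y = x ∧ r.max x y = y ∧ r.min y x = x ∧ r.max y x = y :=
    fun x y h => ⟨@min_eq_left _ r _ _ h, @max_eq_right _ r _ _ h, @min_eq_right _ r _ _ h,
      @max_eq_left _ r _ _ h⟩
  have hswap : ∀ a b c d, r.le a b → r.le c d → f a d + f b c ≤ f a c + f b d := by
    intro a b c d hab hcd
    rcases @eq_or_lt_of_le _ r.toPartialOrder _ _ hab with rfl | hab'
    · linarith
    rcases @eq_or_lt_of_le _ r.toPartialOrder _ _ hcd with rfl | hcd'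
    · linarith
    exact hf a b c d (hlt _ _ hab') (hlt _ _ hcd')
  rcases r.le_total x₁ x₂ with hx | hx <;> rcases r.le_total y₁ y₂ with hy | hy <;>
    obtain ⟨e1, e2, e3, e4⟩ := hmin _ _ hx <;> obtain ⟨e5, e6, e7, e8⟩ := hmin _ _ hy <;>
    have := hswap _ _ _ _ hx hy <;> simp only [e1, e2, e3, e4, e5, e6, e7, e8] <;> linarith

/-- Bit `k` of `precedes x y` tells whether `x` precedes `y` in the `k`-th chain. -/
def precedes (x y : Fin 4) : ℕ :=
  ([[0, 7078975, 14779135, 2067967], [9440192, 0, 10499027, 1343431],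
    [134400, 4213804, 0, 187725], [512, 524344, 74418, 0]].getD x []).getD y 0

theorem testBit_precedes :
    ∀ k < 24, ∀ x y, (precedes x y).testBit k = true ↔ [x, y].Sublist (chain k) := by
  decide +kernel

/-- Entry `y` of the `0`-`1` row encoded by the binary digits of `u`. -/
def entry (u : ℕ) (y : Fin 4) : ℕ := (u.testBit y).toNat

/-- The chains with some `y₁` before `y₂` such that the columns `y₁, y₂` of the rows `u, v` have
negative minor. -/
def negativeMinor (u v : ℕ) : ℕ :=
  [(0, 1), (0, 2), (0, 3), (1, 0), (1, 2), (1, 3), (2, 0), (2, 1), (2, 3), (3, 0), (3, 1),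
    (3, 2)].foldr (fun q s =>
      bif Nat.blt (entry u q.1 + entry v q.2) (entry u q.2 + entry v q.1)
      then precedes q.1 q.2 ||| s else s) 0

theorem testBit_negativeMinor (u v k : ℕ) :
    (negativeMinor u v).testBit k = true ↔ ∃ y₁ y₂, (precedes y₁ y₂).testBit k = true ∧
      entry u y₁ + entry v y₂ < entry u y₂ + entry v y₁ := by
  have aux : ∀ L : List (Fin 4 × Fin 4),
      (L.foldr (fun q s =>
        bif Nat.blt (entry u q.1 + entry v q.2) (entry u q.2 + entry v q.1)
        then precedes q.1 q.2 ||| s else s) 0).testBit k = true ↔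
      ∃ q ∈ L, (precedes q.1 q.2).testBit k = true ∧
        entry u q.1 + entry v q.2 < entry u q.2 + entry v q.1 := by
    intro L
    induction L with
    | nil => simp
    | cons q L ih =>
      rw [List.foldr_cons, List.exists_mem_cons_iff, ← ih]
      by_cases h : entry u q.1 + entry v q.2 < entry u q.2 + entry v q.1
      · have hb : Nat.blt _ _ = true := Nat.blt_eq.mpr h
        simp [h, hb]
      · have hb : Nat.blt _ _ = false := Bool.eq_false_iff.2 (mt Nat.blt_eq.mp h)
        simp [h, hb]
  rw [negativeMinor, aux]
  constructor
  · rintro ⟨q, -, h⟩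
    exact ⟨_, _, h⟩
  · rintro ⟨y₁, y₂, h⟩
    refine ⟨(y₁, y₂), ?_, h⟩
    have hne : y₁ ≠ y₂ := by rintro rfl; exact lt_irrefl _ h.2
    clear h
    revert y₁ y₂
    decide

/-- The chains violated by the rows `u, v` with indices `x, y`. -/
def rowViolation (x y : Fin 4) (u v : ℕ) : ℕ :=
  precedes x y &&& negativeMinor u v ||| precedes y x &&& negativeMinor v u

/-- The chains on which the predicate with the given rows is not supermodular. -/
def violation (a b c d : ℕ) : ℕ :=
  (rowViolation 0 1 a b ||| (rowViolation 0 2 a c ||| rowViolation 1 2 b c)) |||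
    (rowViolation 0 3 a d ||| (rowViolation 1 3 b d ||| rowViolation 2 3 c d))

theorem testBit_violation {f : Fin 4 → Fin 4 → ℤ} {row : Fin 4 → ℕ}
    (hf : ∀ x y, f x y = entry (row x) y) {k : ℕ} (hk : k < 24) :
    (violation (row 0) (row 1) (row 2) (row 3)).testBit k = false ↔
      SupermodList (chain k) f := by
  have h : (violation (row 0) (row 1) (row 2) (row 3)).testBit k = true ↔
      ∃ x₁ x₂, (precedes x₁ x₂).testBit k = true ∧
        (negativeMinor (row x₁) (row x₂)).testBit k = true := by
    have hdiag : ∀ x, precedes x x = 0 := by decide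
    simp only [violation, rowViolation, Nat.testBit_or, Nat.testBit_and, Bool.or_eq_true,
      Bool.and_eq_true]
    constructor
    · rintro (((h | h) | (h | h) | h | h) | (h | h) | (h | h) | h | h) <;> exact ⟨_, _, h⟩
    · rintro ⟨x₁, x₂, h⟩
      have hne : x₁ ≠ x₂ := by rintro rfl; simp [hdiag] at h
      generalize hP : (fun x₁ x₂ => (precedes x₁ x₂).testBit k = true ∧
        (negativeMinor (row x₁) (row x₂)).testBit k = true) = P at h
      have hP' : ∀ x₁ x₂, ((precedes x₁ x₂).testBit k = true ∧
        (negativeMinor (row x₁) (row x₂)).testBit k = true) ↔ P x₁ x₂ := by simp [← hP]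
      have h' : P x₁ x₂ := (hP' _ _).1 h
      simp only [hP']
      clear hP hP' h
      fin_cases x₁ <;> fin_cases x₂ <;> simp_all
  rw [← Bool.not_eq_true, h, SupermodList]
  simp only [testBit_negativeMinor, testBit_precedes k hk, hf]
  push Not
  constructor
  · intro h x₁ x₂ y₁ y₂ hx hy
    exact_mod_cast h x₁ x₂ hx y₁ y₂ hy
  · intro h x₁ x₂ hx y₁ y₂ hy
    exact_mod_cast h x₁ x₂ y₁ y₂ hx hy

/-- At most one of the twelve chains on `Fin 4` is not in `v`. -/
def almostFull (v : ℕ) : Bool :=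
  (List.range 12).any fun k => Nat.beq ((v ||| 2 ^ k) &&& 4095) 4095

theorem eq_of_almostFull_or {v w : ℕ} (h : almostFull v = true) {i j : ℕ} (hi : i < 12)
    (hj : j < 12) (hvi : (v ||| w).testBit i = false) (hvj : (v ||| w).testBit j = false) :
    i = j := by
  obtain ⟨k, -, hk⟩ := List.any_eq_true.1 h
  have key : ∀ i < 12, (v ||| w).testBit i = false → k = i := by
    intro i hi hv
    have h1 := congrArg (Nat.testBit · i) (Nat.eq_of_beq_eq_true hk)
    have h2 : ∀ i < 12, Nat.testBit 4095 i = true := by decide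
    simp only [Nat.testBit_and, Nat.testBit_or, h2 i hi, Bool.and_true,
      (Bool.or_eq_false_iff.1 ((Nat.testBit_or v w i).symm.trans hv)).1, Bool.false_or,
      Nat.testBit_two_pow] at h1
    simpa using h1
  exact (key i hi hvi).symm.trans (key j hj hvj)

/-- For each set of at least two chains on `Fin 4` on which some predicate is exactly
supermodular, the least set of violated chains of such a predicate. -/
def leastViolations : List ℕ :=
  [0, 9572288, 14290940, 11735027, 1773562, 9867215, 12750829, 11800535, 2378775, 7098175,
   4869948, 10776287, 814783, 749502, 3431927, 6315391, 4382589, 4231533, 6396415, 12629999,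
   111615, 3217907, 1653755, 8693455, 894719, 598714]

/-- Some entry of `leastViolations` is contained in `v` and agrees with it on the chains on
`Fin 4`. -/
def boundedBelow (v : ℕ) : Bool :=
  leastViolations.any fun w => Nat.beq (v &&& 4095) (w &&& 4095) && Nat.beq (v &&& w) w

/-- Application to a natural number that is evaluated first. -/
def forceApply (n : ℕ) (p : ℕ → Bool) : Bool :=
  Nat.casesOn n (p 0) fun m => p (m + 1)

theorem forceApply_eq (n : ℕ) (p : ℕ → Bool) : forceApply n p = p n := by
  cases n <;> rfl

/-- The search over all predicates, row by row. -/
def classifyAll : Bool :=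
  (List.range 16).all fun a => forceApply a fun a =>
  (List.range 16).all fun b => forceApply b fun b =>
  forceApply (rowViolation 0 1 a b) fun v => almostFull v ||
  (List.range 16).all fun c => forceApply c fun c =>
  forceApply (v ||| (rowViolation 0 2 a c ||| rowViolation 1 2 b c)) fun v => almostFull v ||
  (List.range 16).all fun d => forceApply d fun d =>
  forceApply (v ||| (rowViolation 0 3 a d ||| (rowViolation 1 3 b d ||| rowViolation 2 3 c d)))
    fun v => almostFull v || boundedBelow v

theorem classifyAll_eq_true : classifyAll = true := by decide +kernel

theorem classify_violation {a b c d : ℕ} (ha : a < 16) (hb : b < 16) (hc : c < 16)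
    (hd : d < 16) :
    (∃ v w, almostFull v = true ∧ violation a b c d = v ||| w) ∨
      boundedBelow (violation a b c d) = true := by
  have h := classifyAll_eq_true
  simp only [classifyAll, forceApply_eq, List.all_eq_true, List.mem_range,
    Bool.or_eq_true] at h
  rcases h a ha b hb with h | h
  · exact .inl ⟨_, _, h, by rw [violation, Nat.lor_assoc]⟩
  rcases h c hc with h | h
  · exact .inl ⟨_, _, h, rfl⟩
  rcases h d hd with h | h
  · exact .inl ⟨_, 0, h, by rw [Nat.or_zero, violation]⟩
  · exact .inr h

/-- All twelve chains on `Fin 4` are in `v`. -/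
def full (v : ℕ) : Bool := Nat.beq (v &&& 4095) 4095

theorem full_eq_false {v k : ℕ} (hk : k < 12) (h : v.testBit k = false) : full v = false := by
  rw [← Bool.not_eq_true]
  intro hv
  have h1 := congrArg (Nat.testBit · k) (Nat.eq_of_beq_eq_true hv)
  have h2 : ∀ k < 12, Nat.testBit 4095 k = true := by decide
  simp [h2 k hk, h] at h1

theorem exists_testBit_eq_false {v : ℕ} (h : full v = false) :
    ∃ k < 12, v.testBit k = false := by
  by_contra! hv
  refine Bool.eq_false_iff.1 h (Nat.beq_eq.mpr (Nat.eq_of_testBit_eq fun k => ?_))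
  rw [show 4095 = 2 ^ 12 - 1 from rfl, Nat.testBit_and, Nat.testBit_two_pow_sub_one]
  by_cases hk : k < 12 <;> simp [hk, hv]

/-- All three chains on the complement of `{d}` are in `v`. -/
def fullCompl (v d : ℕ) : Bool := Nat.beq ((v >>> (12 + 3 * d)) &&& 7) 7

theorem fullCompl_eq_false {v d i : ℕ} (hi : i < 3) (h : v.testBit (12 + 3 * d + i) = false) :
    fullCompl v d = false := by
  rw [← Bool.not_eq_true]
  intro hv
  have h1 := congrArg (Nat.testBit · i) (Nat.eq_of_beq_eq_true hv)
  have h2 : ∀ i < 3, Nat.testBit 7 i = true := by decide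
  simp [h2 i hi, h] at h1

theorem leastViolations_helly :
    (leastViolations.all fun a => leastViolations.all fun b => leastViolations.all fun c =>
      full (a ||| b) || full (a ||| c) || full (b ||| c) || !full (a ||| b ||| c) ||
        (List.range 4).any fun d => fullCompl (a ||| b ||| c) d) = true := by
  decide +kernel

/-- An entry of `leastViolations` below a set of violated chains. -/
theorem exists_leastViolation {v : ℕ} (h : boundedBelow v = true) :
    ∃ w ∈ leastViolations, (∀ k < 12, v.testBit k = w.testBit k) ∧
      ∀ k, v.testBit k = false → w.testBit k = false := by
  obtain ⟨w, hw, h⟩ := List.any_eq_true.1 h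
  rw [Bool.and_eq_true] at h
  refine ⟨w, hw, fun k hk => ?_, fun k hv => ?_⟩
  · have h1 := congrArg (Nat.testBit · k) (Nat.eq_of_beq_eq_true h.1)
    have h2 : ∀ k < 12, Nat.testBit 4095 k = true := by decide
    simpa [h2 k hk] using h1
  · have h1 := congrArg (Nat.testBit · k) (Nat.eq_of_beq_eq_true h.2)
    simpa [hv] using h1.symm

theorem exists_common_of_boundedBelow {u v w : ℕ} (hu : boundedBelow u = true)
    (hv : boundedBelow v = true) (hw : boundedBelow w = true)
    (huv : ∃ k < 12, u.testBit k = false ∧ v.testBit k = false)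
    (huw : ∃ k < 12, u.testBit k = false ∧ w.testBit k = false)
    (hvw : ∃ k < 12, v.testBit k = false ∧ w.testBit k = false)
    (hcompl : ∀ d < 4, ∃ i < 3, u.testBit (12 + 3 * d + i) = false ∧
      v.testBit (12 + 3 * d + i) = false ∧ w.testBit (12 + 3 * d + i) = false) :
    ∃ k < 12, u.testBit k = false ∧ v.testBit k = false ∧ w.testBit k = false := by
  obtain ⟨a, ha, hua, ha'⟩ := exists_leastViolation hu
  obtain ⟨b, hb, hvb, hb'⟩ := exists_leastViolation hv
  obtain ⟨c, hc, hwc, hc'⟩ := exists_leastViolation hw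
  have h := leastViolations_helly
  simp only [List.all_eq_true] at h
  have h := h a ha b hb c hc
  have hab : full (a ||| b) = false := by
    obtain ⟨k, hk, h1, h2⟩ := huv
    exact full_eq_false hk (by simp [ha' k h1, hb' k h2])
  have hac : full (a ||| c) = false := by
    obtain ⟨k, hk, h1, h2⟩ := huw
    exact full_eq_false hk (by simp [ha' k h1, hc' k h2])
  have hbc : full (b ||| c) = false := by
    obtain ⟨k, hk, h1, h2⟩ := hvw
    exact full_eq_false hk (by simp [hb' k h1, hc' k h2])
  have habc : ((List.range 4).any fun d => fullCompl (a ||| b ||| c) d) = false := by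
    refine List.any_eq_false.2 fun d hd => Bool.eq_false_iff.1 ?_
    obtain ⟨i, hi, h1, h2, h3⟩ := hcompl d (List.mem_range.1 hd)
    exact fullCompl_eq_false hi (by simp [ha' _ h1, hb' _ h2, hc' _ h3])
  rw [hab, hac, hbc, habc] at h
  obtain ⟨k, hk, hk'⟩ := exists_testBit_eq_false (by simpa using h)
  rw [Nat.testBit_or, Nat.testBit_or, Bool.or_eq_false_iff, Bool.or_eq_false_iff] at hk'
  exact ⟨k, hk, (hua k hk).trans hk'.1.1, (hvb k hk).trans hk'.1.2, (hwc k hk).trans hk'.2⟩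

/-- A binary predicate is described by a set of violated chains, which either omits at most one
chain on `Fin 4` or is bounded below by an entry of `leastViolations`. -/
theorem exists_violation {f : Fin 4 → Fin 4 → ℤ} (hf : ∀ x y, f x y = 0 ∨ f x y = 1) :
    ∃ v : ℕ, (∀ k < 24, v.testBit k = false ↔ SupermodList (chain k) f) ∧
      ((∀ i < 12, ∀ j < 12, v.testBit i = false → v.testBit j = false → i = j) ∨
        boundedBelow v = true) := by
  have hrow : ∀ g : Fin 4 → Bool, ∃ u < 16, ∀ y, (g y).toNat = entry u y := by decide +kernel
  choose row hlt hrow using fun x => hrow fun y => decide (f x y = 1)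
  have hentry : ∀ x y, f x y = entry (row x) y := by
    intro x y
    rw [← hrow]
    rcases hf x y with h | h <;> simp [h]
  refine ⟨_, fun k hk => testBit_violation hentry hk, ?_⟩
  refine (classify_violation (hlt 0) (hlt 1) (hlt 2) (hlt 3)).imp_left ?_
  rintro ⟨v, w, hv, h⟩ i hi j hj
  rw [h]
  exact eq_of_almostFull_or hv hi hj

/-- For any set `F = {f₁, f₂, f₃}` of three pairwise distinct
binary predicates on the four-element domain `D = {0,1,2,3}`, at least one of the
following holds: (1) `F` is supermodular on some chain on `D`; (2) for some proper
subset `D' ⊂ D`, the restriction of `F` to `D' × D'` is not supermodular on any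
chain on `D'`; (3) some proper nonempty subset of `F` is not supermodular on any
chain on `D`. -/
theorem no_bad_triple_on_four_elements
    (f1 f2 f3 : Fin 4 → Fin 4 → ℤ)
    (h01 : ∀ f ∈ ({f1, f2, f3} : Finset (Fin 4 → Fin 4 → ℤ)),
      ∀ x y, f x y = 0 ∨ f x y = 1)
    (h12 : f1 ≠ f2) (h13 : f1 ≠ f3) (h23 : f2 ≠ f3) :
    (∃ r : LinearOrder (Fin 4),
        ∀ f ∈ ({f1, f2, f3} : Finset (Fin 4 → Fin 4 → ℤ)), SupermodChain2 r f) ∨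
    (∃ D' : Finset (Fin 4), D' ⊂ Finset.univ ∧
        ¬ ∃ r : LinearOrder ↥D',
            ∀ f ∈ ({f1, f2, f3} : Finset (Fin 4 → Fin 4 → ℤ)),
              SupermodChain2 r (fun x y : ↥D' => f x.1 y.1)) ∨
    (∃ G : Finset (Fin 4 → Fin 4 → ℤ),
        G ⊂ ({f1, f2, f3} : Finset (Fin 4 → Fin 4 → ℤ)) ∧ G.Nonempty ∧
        ¬ ∃ r : LinearOrder (Fin 4), ∀ f ∈ G, SupermodChain2 r f) := by
  classical
  simp only [Finset.mem_insert, Finset.mem_singleton, forall_eq_or_imp, forall_eq] at h01 ⊢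
  obtain ⟨v₁, hv₁, hc₁⟩ := exists_violation h01.1
  obtain ⟨v₂, hv₂, hc₂⟩ := exists_violation h01.2.1
  obtain ⟨v₃, hv₃, hc₃⟩ := exists_violation h01.2.2
  rw [or_iff_not_imp_right]
  intro hnot
  push Not at hnot
  obtain ⟨hres, hsub⟩ := hnot
  have hpair : ∀ f g h : Fin 4 → Fin 4 → ℤ, h ≠ f → h ≠ g →
      ({f1, f2, f3} : Finset (Fin 4 → Fin 4 → ℤ)) = {f, g, h} →
      ∃ k < 12, SupermodList (chain k) f ∧ SupermodList (chain k) g := by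
    intro f g h hf hg heq
    obtain ⟨r, hr⟩ := hsub {f, g} (by
      rw [heq, Finset.ssubset_iff_of_subset (by intro; simp; tauto)]
      exact ⟨h, by simp, by simp [hf, hg]⟩) (by simp)
    obtain ⟨k, hk, hk'⟩ := exists_chain_of_linearOrder r
    exact ⟨k, hk, hk' f (hr f (by simp)), hk' g (hr g (by simp))⟩
  obtain ⟨k₁₂, hk₁₂, h₁₂⟩ := hpair f1 f2 f3 h13.symm h23.symm rfl
  obtain ⟨k₁₃, hk₁₃, h₁₃⟩ := hpair f1 f3 f2 h12.symm h23 (by ext; simp; tauto)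
  obtain ⟨k₂₃, hk₂₃, h₂₃⟩ := hpair f2 f3 f1 h12 h13 (by ext; simp; tauto)
  rw [← hv₁ _ (by omega), ← hv₂ _ (by omega)] at h₁₂
  rw [← hv₁ _ (by omega), ← hv₃ _ (by omega)] at h₁₃
  rw [← hv₂ _ (by omega), ← hv₃ _ (by omega)] at h₂₃
  obtain ⟨k, hk, h₁, h₂, h₃⟩ : ∃ k < 12, v₁.testBit k = false ∧ v₂.testBit k = false ∧
      v₃.testBit k = false := by
    rcases hc₁ with hc₁ | hc₁
    · obtain rfl := hc₁ _ hk₁₂ _ hk₁₃ h₁₂.1 h₁₃.1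
      exact ⟨_, hk₁₂, h₁₂.1, h₁₂.2, h₁₃.2⟩
    rcases hc₂ with hc₂ | hc₂
    · obtain rfl := hc₂ _ hk₁₂ _ hk₂₃ h₁₂.2 h₂₃.1
      exact ⟨_, hk₁₂, h₁₂.1, h₁₂.2, h₂₃.2⟩
    rcases hc₃ with hc₃ | hc₃
    · obtain rfl := hc₃ _ hk₁₃ _ hk₂₃ h₁₃.2 h₂₃.2
      exact ⟨_, hk₁₃, h₁₃.1, h₂₃.1, h₁₃.2⟩
    refine exists_common_of_boundedBelow hc₁ hc₂ hc₃ ⟨_, hk₁₂, h₁₂⟩ ⟨_, hk₁₃, h₁₃⟩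
      ⟨_, hk₂₃, h₂₃⟩ fun d hd => ?_
    obtain ⟨r, hr₁, hr₂, hr₃⟩ := hres (Finset.univ.erase ⟨d, hd⟩)
      (Finset.erase_ssubset (Finset.mem_univ _))
    obtain ⟨i, hi, h⟩ := exists_chain_of_linearOrder_compl ⟨d, hd⟩ r
    exact ⟨i, hi, (hv₁ _ (by omega)).2 (h _ hr₁), (hv₂ _ (by omega)).2 (h _ hr₂),
      (hv₃ _ (by omega)).2 (h _ hr₃)⟩
  obtain ⟨r, hr⟩ := exists_linearOrder_of_chain hk
  exact ⟨r, hr _ ((hv₁ k (by omega)).1 h₁), hr _ ((hv₂ k (by omega)).1 h₂),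
    hr _ ((hv₃ k (by omega)).1 h₃)⟩
end
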